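/- arXiv:2409.05290 — 13 statements merged into one kernel-verified Lean document; each statement's English description precedes it below -/
import Mathlib

section
/- Let S : ℝⁿ × ℝᵐ → ℝ be convex-concave and differentiable, and let (x*, y*) be a saddle point of S. Then for every x ∈ ℝⁿ and y ∈ ℝᵐ one has 0 ≤ S(x, y*) − S(x*, y) ≤ ⟨x − x*, ∇ₓS(x,y)⟩ − ⟨y − y*, ∇_yS(x,y)⟩. In particular, along any trajectory of the saddle flow dynamics of S, the function V(x,y) = (1/2)‖x − x*‖² + (1/2)‖y − y*‖² has derivative at most S(x*, y) − S(x, y*) ≤ 0 at every time. -/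
/-!
The estimate is the sum of two first-order inequalities. Convexity of `S(·, y)` at `x`, tested
against `xs`, gives `S x y - S xs y ≤ ⟪x - xs, ∇ₓS(x,y)⟫`; concavity of `S(x, ·)` at `y`, tested
against `ys`, gives `S x ys - S x y ≤ -⟪y - ys, ∇_y S(x,y)⟫`. Adding them cancels `S x y`.
Nonnegativity of `S x ys - S xs y` is the saddle inequality. Along the flow, the derivative of
`V` is `-⟪x - xs, ∇ₓS⟫ + ⟪y - ys, ∇_y S⟫`, so the decrease of `V` is the same estimate negated.
-/

open Set Filter Topology RealInnerProductSpace

/-- The first-order inequality for a differentiable convex function, obtained by restricting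
`f` to the segment from `x` to `z`, where the slope at `0` is at most the secant slope. -/
theorem convex_sub_le_inner_gradient {E : Type*} [NormedAddCommGroup E] [InnerProductSpace ℝ E]
    [CompleteSpace E] {f : E → ℝ} (hf : ConvexOn ℝ univ f) {x : E}
    (hd : DifferentiableAt ℝ f x) (z : E) :
    f x - f z ≤ ⟪x - z, gradient f x⟫ := by
  have hc : ConvexOn ℝ univ (f ∘ AffineMap.lineMap (k := ℝ) x z) :=
    hf.comp_affineMap (AffineMap.lineMap x z)
  have hd' : HasFDerivAt f (InnerProductSpace.toDual ℝ E (gradient f x))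
      (AffineMap.lineMap x z (0 : ℝ)) := by
    simpa using hd.hasGradientAt.hasFDerivAt
  have hl := hd'.comp_hasDerivAt (0 : ℝ) AffineMap.hasDerivAt_lineMap
  have h := hc.le_slope_of_hasDerivAt (mem_univ 0) (mem_univ 1) one_pos hl
  simp only [slope_def_field, Function.comp_apply, AffineMap.lineMap_apply_zero,
    AffineMap.lineMap_apply_one, sub_zero, div_one, InnerProductSpace.toDual_apply_apply] at h
  rw [real_inner_comm, ← neg_sub z x, inner_neg_right]
  linarith

/-- For a convex-concave differentiable `S` with saddle point `(xs, ys)`,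
`0 ≤ S x ys - S xs y ≤ ⟪x - xs, ∇ₓS(x,y)⟫ - ⟪y - ys, ∇_y S(x,y)⟫`, and along any
trajectory of the saddle flow dynamics, the quadratic Lyapunov function `V` has
derivative at most `S xs (y t) - S (x t) ys ≤ 0` at every time. -/
theorem saddle_flow_lyapunov_decrease {n m : ℕ}
    (S : EuclideanSpace ℝ (Fin n) → EuclideanSpace ℝ (Fin m) → ℝ)
    (hconv : ∀ y, ConvexOn ℝ univ (fun x => S x y))
    (hconc : ∀ x, ConcaveOn ℝ univ (fun y => S x y))
    (hdiff : Differentiable ℝ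
      (fun p : EuclideanSpace ℝ (Fin n) × EuclideanSpace ℝ (Fin m) => S p.1 p.2))
    (xs : EuclideanSpace ℝ (Fin n)) (ys : EuclideanSpace ℝ (Fin m))
    (hsaddle : ∀ x y, S xs y ≤ S xs ys ∧ S xs ys ≤ S x ys) :
    (∀ x y, 0 ≤ S x ys - S xs y ∧
      S x ys - S xs y ≤
        ⟪x - xs, gradient (fun x' => S x' y) x⟫ -
          ⟪y - ys, gradient (fun y' => S x y') y⟫) ∧
    (∀ (x : ℝ → EuclideanSpace ℝ (Fin n)) (y : ℝ → EuclideanSpace ℝ (Fin m)),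
      (∀ t, 0 ≤ t → HasDerivAt x (-(gradient (fun x' => S x' (y t)) (x t))) t) →
      (∀ t, 0 ≤ t → HasDerivAt y (gradient (fun y' => S (x t) y') (y t)) t) →
      ∀ t, 0 ≤ t → ∀ d : ℝ,
        HasDerivAt (fun τ => (1/2) * ‖x τ - xs‖^2 + (1/2) * ‖y τ - ys‖^2) d t →
        d ≤ S xs (y t) - S (x t) ys ∧ S xs (y t) - S (x t) ys ≤ 0) := by
  have key : ∀ x y, 0 ≤ S x ys - S xs y ∧
      S x ys - S xs y ≤
        ⟪x - xs, gradient (fun x' => S x' y) x⟫ -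
          ⟪y - ys, gradient (fun y' => S x y') y⟫ := by
    intro x y
    have hdx : DifferentiableAt ℝ (fun x' => S x' y) x :=
      (hdiff (x, y)).comp x (f := fun x' => (x', y)) (by fun_prop)
    have hdy : DifferentiableAt ℝ (fun y' => S x y') y :=
      (hdiff (x, y)).comp y (f := fun y' => (x, y')) (by fun_prop)
    have h1 := convex_sub_le_inner_gradient (hconv y) hdx xs
    have h2 := convex_sub_le_inner_gradient (hconc x).neg hdy.neg ys
    have hg : gradient (-fun y' => S x y') y = -gradient (fun y' => S x y') y := by
      simp only [gradient, fderiv_neg, map_neg]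
    rw [hg, inner_neg_right] at h2
    simp only [Pi.neg_apply] at h2
    have h3 := (hsaddle x y).1
    have h4 := (hsaddle x y).2
    constructor <;> linarith
  refine ⟨key, fun x y hx hy t ht d hV => ?_⟩
  obtain ⟨h0, h1⟩ := key (x t) (y t)
  have hV' := ((((hx t ht).sub_const xs).norm_sq).const_mul (1 / 2 : ℝ)).add
    ((((hy t ht).sub_const ys).norm_sq).const_mul (1 / 2 : ℝ))
  have hd := hV.unique hV'
  rw [inner_neg_right] at hd
  constructor <;> linarith
end

section
/- Let S : ℝⁿ × ℝᵐ → ℝ be convex-concave, continuously differentiable, and possess a saddle point. Suppose there is an observable certificate for S, i.e., a function h : ℝⁿ × ℝᵐ → ℝ² and a saddle point (x*, y*) such that (i) 0 ≤ h₁(x,y) ≤ S(x*, y*) − S(x*, y) and 0 ≤ h₂(x,y) ≤ S(x, y*) − S(x*, y*) for all (x,y), and (ii) every trajectory (x(t), y(t)) of the saddle flow dynamics of S with h(x(t), y(t)) = 0 for all t ≥ 0 satisfies x'(t) = 0 and y'(t) = 0 for all t ≥ 0. Then every trajectory (x(t), y(t)) of the saddle flow dynamics of S converges as t → ∞ to some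 saddle point (x∞, y∞) of S. -/
/-! The saddle flow is `z' = F z` with `F (x, y) = (-∇ₓS, ∇_yS)` on the Euclidean product space. Convexity
in `x` and concavity in `y` make `F` dissipative, `⟪F a - F b, a - b⟫ ≤ 0`, so the distance between
any two trajectories is nonincreasing (`antitoneOn_norm_sub`). Comparing with the constant trajectory
at the saddle point shows that every trajectory is bounded.

The invariance principle needed here (`exists_tendsto_equilibrium`) follows from this contraction
property, although `F` is merely continuous and trajectories through a given point need not be known
to exist a priori. If `z (tₖ) → a`, the shifted trajectories `z (tₖ + ·)` are uniformly Cauchy on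
`[0, ∞)`, and their limit `w` is again a trajectory, starting at `a`, whose distance to the saddle
point is constant. Differentiating the squared distance shows that both saddle gaps vanish along `w`.
The certificate is squeezed between `0` and the gaps, so it vanishes along `w` too; hence `w` is
stationary and `a` is an equilibrium. Comparing `z` with the constant trajectory `a` gives `z → a`,
and equilibria of the flow are saddle points by the gradient inequality.
-/

open Set Filter Topology RealInnerProductSpace

section Dissipative

variable {H : Type*} [NormedAddCommGroup H] [InnerProductSpace ℝ H]

/-- The flow of a dissipative field is nonexpansive. -/
lemma antitoneOn_norm_sub {F : H → H} (hF : ∀ a b, ⟪F a - F b, a - b⟫ ≤ 0) {z w : ℝ → H}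
    (hz : ∀ t, 0 ≤ t → HasDerivAt z (F (z t)) t) (hw : ∀ t, 0 ≤ t → HasDerivAt w (F (w t)) t) :
    AntitoneOn (fun t => ‖z t - w t‖) (Ici 0) := by
  have hd : ∀ t, 0 ≤ t → HasDerivAt (fun t => ‖z t - w t‖ ^ 2)
      (2 * ⟪z t - w t, F (z t) - F (w t)⟫) t := fun t ht =>
    ((hz t ht).sub (hw t ht)).norm_sq
  have hsq : AntitoneOn (fun t => ‖z t - w t‖ ^ 2) (Ici 0) := by
    refine antitoneOn_of_deriv_nonpos (convex_Ici 0)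
      (fun t ht => (hd t ht).continuousAt.continuousWithinAt) ?_ ?_
    · intro t ht
      rw [interior_Ici] at ht
      exact (hd t (le_of_lt ht)).differentiableAt.differentiableWithinAt
    · intro t ht
      rw [interior_Ici] at ht
      rw [(hd t (le_of_lt ht)).deriv, real_inner_comm]
      linarith [hF (z t) (w t)]
  intro s hs t ht hst
  exact le_of_sq_le_sq (hsq hs ht hst) (norm_nonneg _)

/-- Invariance principle for a continuous dissipative field: if the equilibrium `zs` is such that
every trajectory `w` with `d/dt ‖w - zs‖² = 0` starts at an equilibrium, then every trajectory
converges to an equilibrium. -/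
lemma exists_tendsto_equilibrium [FiniteDimensional ℝ H] {F : H → H} (hFc : Continuous F)
    (hF : ∀ a b, ⟪F a - F b, a - b⟫ ≤ 0) {zs : H} (hzs : F zs = 0)
    (hobs : ∀ w : ℝ → H, (∀ t, 0 ≤ t → HasDerivAt w (F (w t)) t) →
      (∀ t, 0 ≤ t → ⟪F (w t), w t - zs⟫ = 0) → F (w 0) = 0)
    {z : ℝ → H} (hz : ∀ t, 0 ≤ t → HasDerivAt z (F (z t)) t) :
    ∃ a, F a = 0 ∧ Tendsto z atTop (𝓝 a) := by
  have : ProperSpace H := FiniteDimensional.proper ℝ H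
  have hconst : ∀ c, F c = 0 → AntitoneOn (fun t => ‖z t - c‖) (Ici 0) := fun c hc =>
    antitoneOn_norm_sub hF hz (w := fun _ => c) (fun t _ => by
      simpa [hc] using hasDerivAt_const t c)
  have hshift : ∀ r, 0 ≤ r → ∀ t, 0 ≤ t →
      HasDerivAt (fun t => z (r + t)) (F (z (r + t))) t := fun r hr t ht =>
    (hz (r + t) (by positivity)).comp_const_add r t
  set K := Metric.closedBall zs ‖z 0 - zs‖ with hK
  have hKc : IsCompact K := isCompact_closedBall _ _
  have hzK : ∀ t, 0 ≤ t → z t ∈ K := fun t ht => by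
    rw [hK, mem_closedBall_iff_norm]
    exact hconst zs hzs (mem_Ici.2 le_rfl) ht ht
  obtain ⟨a, -, φ, hφ, ha⟩ := hKc.tendsto_subseq (x := fun k : ℕ => z k)
    (fun k => hzK k (Nat.cast_nonneg k))
  have ha : Tendsto (fun k => z (φ k)) atTop (𝓝 a) := ha
  have hφt : Tendsto (fun k => (φ k : ℝ)) atTop atTop :=
    tendsto_natCast_atTop_atTop.comp hφ.tendsto_atTop
  have hcontr : ∀ t, 0 ≤ t → ∀ k j, ‖z (φ k + t) - z (φ j + t)‖ ≤ ‖z (φ k) - z (φ j)‖ := by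
    intro t ht k j
    simpa using antitoneOn_norm_sub hF (hshift (φ k) (Nat.cast_nonneg _))
      (hshift (φ j) (Nat.cast_nonneg _)) (mem_Ici.2 le_rfl) ht ht
  -- The limit of the shifted trajectories, frozen at its initial value for negative times.
  have hlim : ∀ t : ℝ, ∃ b, Tendsto (fun k => z (φ k + max t 0)) atTop (𝓝 b) := by
    intro t
    refine cauchySeq_tendsto_of_complete ?_
    have hc := ha.cauchySeq
    rw [Metric.cauchySeq_iff] at hc ⊢
    intro ε hε
    obtain ⟨N, hN⟩ := hc ε hε
    refine ⟨N, fun k hk j hj => lt_of_le_of_lt ?_ (hN k hk j hj)⟩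
    rw [dist_eq_norm, dist_eq_norm]
    exact hcontr _ (le_max_right _ _) k j
  choose u hu using hlim
  have hzcont : ∀ k, Continuous (fun t : ℝ => z (φ k + max t 0)) := fun k =>
    continuous_iff_continuousAt.2 fun t =>
      ContinuousAt.comp (g := z) (f := fun t : ℝ => (φ k : ℝ) + max t 0)
        (hz _ (by positivity)).continuousAt (by fun_prop)
  have hunif : TendstoUniformly (fun k (t : ℝ) => z (φ k + max t 0)) u atTop := by
    rw [Metric.tendstoUniformly_iff]
    intro ε hε
    have h0 : Tendsto (fun k => ‖a - z (φ k)‖) atTop (𝓝 0) := by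
      have := (tendsto_const_nhds (x := a)).sub ha
      simpa using this.norm
    filter_upwards [h0.eventually (gt_mem_nhds hε)] with k hk t
    refine lt_of_le_of_lt ?_ hk
    rw [dist_eq_norm]
    exact le_of_tendsto_of_tendsto' ((hu t).sub_const _).norm (ha.sub_const _).norm
      (fun j => hcontr _ (le_max_right _ _) j k)
  have huc : Continuous u := hunif.continuous (Frequently.of_forall hzcont)
  have hu0 : u 0 = a := tendsto_nhds_unique (hu 0) (by simpa using ha)
  obtain ⟨C, hC⟩ := hKc.exists_bound_of_continuousOn hFc.continuousOn
  have hFz : ∀ k, Continuous (fun s : ℝ => F (z (φ k + max s 0))) := fun k =>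
    hFc.comp (hzcont k)
  have hFu : Continuous (fun s => F (u s)) := hFc.comp huc
  -- The integral form of the equation passes to the limit by dominated convergence.
  have hint : ∀ t, 0 ≤ t → u t = a + ∫ s in (0 : ℝ)..t, F (u s) := by
    intro t ht
    have h1 : ∀ k, ∫ s in (0 : ℝ)..t, F (z (φ k + max s 0)) = z (φ k + max t 0) - z (φ k) := by
      intro k
      have := intervalIntegral.integral_eq_sub_of_hasDerivAt (a := (0 : ℝ)) (b := t)
        (f := fun s => z (φ k + s)) (f' := fun s => F (z (φ k + max s 0)))
        (fun s hs => by
          rw [uIcc_of_le ht] at hs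
          rw [max_eq_left hs.1]
          exact hshift _ (Nat.cast_nonneg _) s hs.1)
        ((hFz k).intervalIntegrable _ _)
      simpa [max_eq_left ht] using this
    have h2 : Tendsto (fun k => ∫ s in (0 : ℝ)..t, F (z (φ k + max s 0))) atTop
        (𝓝 (∫ s in (0 : ℝ)..t, F (u s))) := by
      refine intervalIntegral.tendsto_integral_filter_of_dominated_convergence (fun _ => C)
        (.of_forall fun k => (hFz k).aestronglyMeasurable) ?_ (by simp) ?_
      · exact .of_forall fun k => .of_forall fun s _ => hC _ (hzK _ (by positivity))
      · exact .of_forall fun s _ => (hFc.tendsto _).comp (hu s)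
    simp only [h1] at h2
    rw [← tendsto_nhds_unique ((hu t).sub ha) h2]
    abel
  -- This agrees with `u` for nonnegative times and is two-sidedly differentiable at `0`.
  set w : ℝ → H := fun t => a + ∫ s in (0 : ℝ)..t, F (u s) with hw
  have hwu : ∀ t, 0 ≤ t → w t = u t := fun t ht => (hint t ht).symm
  have hwd : ∀ t, 0 ≤ t → HasDerivAt w (F (w t)) t := by
    intro t ht
    rw [hwu t ht]
    exact (intervalIntegral.integral_hasDerivAt_right (hFu.intervalIntegrable _ _)
      (hFu.stronglyMeasurableAtFilter _ _) hFu.continuousAt).const_add a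
  -- The distance from `z` to `zs` converges, so it is constant along the limit trajectory.
  have hdist : ∀ t, 0 ≤ t → ‖w t - zs‖ = ‖a - zs‖ := by
    intro t ht
    have hanti : Antitone (fun t : ℝ => ‖z (max t 0) - zs‖) := fun s r hsr =>
      hconst zs hzs (mem_Ici.2 (le_max_right _ _)) (mem_Ici.2 (le_max_right _ _))
        (max_le_max_right 0 hsr)
    have hL := tendsto_atTop_ciInf hanti ⟨0, by rintro _ ⟨t, rfl⟩; exact norm_nonneg _⟩
    have e1 := hL.comp hφt
    have e2 := hL.comp (tendsto_atTop_add_const_right atTop t hφt)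
    have f1 : Tendsto (fun k => ‖z (φ k) - zs‖) atTop (𝓝 ‖a - zs‖) := (ha.sub_const zs).norm
    have f2 := ((hu t).sub_const zs).norm
    rw [max_eq_left ht, ← hwu t ht] at f2
    have g1 := tendsto_nhds_unique f1 (e1.congr fun k => by
      simp only [Function.comp_apply]; rw [max_eq_left (Nat.cast_nonneg _)])
    have g2 := tendsto_nhds_unique f2 (e2.congr fun k => by
      simp only [Function.comp_apply]; rw [max_eq_left (by positivity)])
    rw [g1, g2]
  have hinner : ∀ t, 0 ≤ t → ⟪F (w t), w t - zs⟫ = 0 := by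
    intro t ht
    have h1 : HasDerivWithinAt (fun t => ‖w t - zs‖ ^ 2) (2 * ⟪w t - zs, F (w t)⟫) (Ici t) t :=
      ((hwd t ht).sub_const zs).norm_sq.hasDerivWithinAt
    have h2 : HasDerivWithinAt (fun t => ‖w t - zs‖ ^ 2) 0 (Ici t) t :=
      (hasDerivWithinAt_const t (Ici t) (‖a - zs‖ ^ 2)).congr
        (fun s hs => by rw [hdist s (ht.trans hs)]) (by rw [hdist t ht])
    have h3 := (uniqueDiffWithinAt_Ici t).eq_deriv _ h1 h2
    rw [real_inner_comm]
    linarith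
  have hFa : F a = 0 := by
    have := hobs w hwd hinner
    rwa [hwu 0 le_rfl, hu0] at this
  refine ⟨a, hFa, ?_⟩
  rw [Metric.tendsto_atTop]
  intro ε hε
  obtain ⟨k, hk⟩ := ((Metric.tendsto_nhds.1 ha) ε hε).exists
  refine ⟨φ k, fun t ht => lt_of_le_of_lt ?_ hk⟩
  rw [dist_eq_norm, dist_eq_norm]
  have h0 : (0 : ℝ) ≤ φ k := Nat.cast_nonneg _
  exact hconst a hFa h0 (h0.trans ht) ht

end Dissipative

section Gradient

variable {E : Type*} [NormedAddCommGroup E] [InnerProductSpace ℝ E] [CompleteSpace E]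

lemma ConvexOn.add_inner_gradient_le {f : E → ℝ} (hf : ConvexOn ℝ univ f) {a : E}
    (hd : DifferentiableAt ℝ f a) (b : E) : f a + ⟪gradient f a, b - a⟫ ≤ f b := by
  have hc : ConvexOn ℝ univ (fun t : ℝ => f (AffineMap.lineMap a b t)) := by
    have := hf.comp_affineMap (AffineMap.lineMap a b : ℝ →ᵃ[ℝ] E)
    rwa [preimage_univ] at this
  have h0 : HasDerivAt (fun t : ℝ => f (AffineMap.lineMap a b t)) ⟪gradient f a, b - a⟫ 0 := by
    have h1 : HasFDerivAt f (InnerProductSpace.toDual ℝ E (gradient f a))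
        (AffineMap.lineMap a b (0 : ℝ)) := by
      simpa using hd.hasGradientAt.hasFDerivAt
    exact h1.comp_hasDerivAt (0 : ℝ) AffineMap.hasDerivAt_lineMap
  have := hc.le_slope_of_hasDerivAt (mem_univ 0) (mem_univ 1) one_pos h0
  simp only [slope_def_field, AffineMap.lineMap_apply_one, AffineMap.lineMap_apply_zero, sub_zero,
    div_one] at this
  linarith

lemma ConcaveOn.le_add_inner_gradient {f : E → ℝ} (hf : ConcaveOn ℝ univ f) {a : E}
    (hd : DifferentiableAt ℝ f a) (b : E) : f b ≤ f a + ⟪gradient f a, b - a⟫ := by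
  have h := hf.neg.add_inner_gradient_le hd.neg b
  have hg : gradient (-f) a = -gradient f a := by
    simp [gradient, fderiv_neg]
  rw [hg, inner_neg_left] at h
  simp only [Pi.neg_apply] at h
  linarith

end Gradient

/-- If a convex-concave, continuously differentiable function `S` with a
saddle point admits an observable certificate `h = (h₁, h₂)`, then every trajectory of
the saddle flow dynamics of `S` converges to some saddle point of `S`. -/
theorem saddle_flow_asymptotic_convergence_of_observable_certificate {n m : ℕ}
    (S : EuclideanSpace ℝ (Fin n) → EuclideanSpace ℝ (Fin m) → ℝ)
    (hconv : ∀ y, ConvexOn ℝ univ (fun x => S x y))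
    (hconc : ∀ x, ConcaveOn ℝ univ (fun y => S x y))
    (hC1 : ContDiff ℝ 1
      (fun p : EuclideanSpace ℝ (Fin n) × EuclideanSpace ℝ (Fin m) => S p.1 p.2))
    (xs : EuclideanSpace ℝ (Fin n)) (ys : EuclideanSpace ℝ (Fin m))
    (hsaddle : ∀ x y, S xs y ≤ S xs ys ∧ S xs ys ≤ S x ys)
    (h₁ h₂ : EuclideanSpace ℝ (Fin n) → EuclideanSpace ℝ (Fin m) → ℝ)
    -- (i) the certificate is nonnegative and bounded by the saddle gaps
    (hbound : ∀ x y, 0 ≤ h₁ x y ∧ h₁ x y ≤ S xs ys - S xs y ∧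
      0 ≤ h₂ x y ∧ h₂ x y ≤ S x ys - S xs ys)
    -- (ii) observability: trajectories along which h ≡ 0 are stationary
    (hobs : ∀ (x : ℝ → EuclideanSpace ℝ (Fin n)) (y : ℝ → EuclideanSpace ℝ (Fin m)),
      (∀ t, 0 ≤ t → HasDerivAt x (-(gradient (fun x' => S x' (y t)) (x t))) t) →
      (∀ t, 0 ≤ t → HasDerivAt y (gradient (fun y' => S (x t) y') (y t)) t) →
      (∀ t, 0 ≤ t → h₁ (x t) (y t) = 0 ∧ h₂ (x t) (y t) = 0) →
      ∀ t, 0 ≤ t → HasDerivAt x (0 : EuclideanSpace ℝ (Fin n)) t ∧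
        HasDerivAt y (0 : EuclideanSpace ℝ (Fin m)) t)
    -- a trajectory of the saddle flow dynamics
    (x : ℝ → EuclideanSpace ℝ (Fin n)) (y : ℝ → EuclideanSpace ℝ (Fin m))
    (hx : ∀ t, 0 ≤ t → HasDerivAt x (-(gradient (fun x' => S x' (y t)) (x t))) t)
    (hy : ∀ t, 0 ≤ t → HasDerivAt y (gradient (fun y' => S (x t) y') (y t)) t) :
    ∃ (xe : EuclideanSpace ℝ (Fin n)) (ye : EuclideanSpace ℝ (Fin m)),
      (∀ x' y', S xe y' ≤ S xe ye ∧ S xe ye ≤ S x' ye) ∧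
      Tendsto (fun t => (x t, y t)) atTop (𝓝 (xe, ye)) := by
  have hD : Differentiable ℝ
      (fun p : EuclideanSpace ℝ (Fin n) × EuclideanSpace ℝ (Fin m) => S p.1 p.2) :=
    hC1.differentiable one_ne_zero
  have hDx : ∀ a b, HasFDerivAt (fun x' => S x' b)
      ((fderiv ℝ (fun p : EuclideanSpace ℝ (Fin n) × EuclideanSpace ℝ (Fin m) => S p.1 p.2)
        (a, b)).comp (.inl ℝ _ _)) a := fun a b =>
    HasFDerivAt.comp (f := fun x' => (x', b)) a (hD (a, b)).hasFDerivAt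
      (hasFDerivAt_prodMk_left a b)
  have hDy : ∀ a b, HasFDerivAt (fun y' => S a y')
      ((fderiv ℝ (fun p : EuclideanSpace ℝ (Fin n) × EuclideanSpace ℝ (Fin m) => S p.1 p.2)
        (a, b)).comp (.inr ℝ _ _)) b := fun a b =>
    HasFDerivAt.comp (f := fun y' => (a, y')) b (hD (a, b)).hasFDerivAt
      (hasFDerivAt_prodMk_right a b)
  have hfd := hC1.continuous_fderiv one_ne_zero
  have hcx : Continuous (fun p : EuclideanSpace ℝ (Fin n) × EuclideanSpace ℝ (Fin m) =>
      gradient (fun x' => S x' p.2) p.1) := by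
    simp only [gradient, (hDx _ _).fderiv]
    fun_prop
  have hcy : Continuous (fun p : EuclideanSpace ℝ (Fin n) × EuclideanSpace ℝ (Fin m) =>
      gradient (fun y' => S p.1 y') p.2) := by
    simp only [gradient, (hDy _ _).fderiv]
    fun_prop
  have gx : ∀ a b a', S a b + ⟪gradient (fun x' => S x' b) a, a' - a⟫ ≤ S a' b := fun a b a' =>
    (hconv b).add_inner_gradient_le (hDx a b).differentiableAt a'
  have gy : ∀ a b b', S a b' ≤ S a b + ⟪gradient (fun y' => S a y') b, b' - b⟫ := fun a b b' =>
    (hconc a).le_add_inner_gradient (hDy a b).differentiableAt b'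
  set F : WithLp 2 (EuclideanSpace ℝ (Fin n) × EuclideanSpace ℝ (Fin m)) →
      WithLp 2 (EuclideanSpace ℝ (Fin n) × EuclideanSpace ℝ (Fin m)) := fun p =>
    WithLp.toLp 2 (-gradient (fun x' => S x' p.snd) p.fst, gradient (fun y' => S p.fst y') p.snd)
    with hFdef
  let e := WithLp.prodContinuousLinearEquiv 2 ℝ (EuclideanSpace ℝ (Fin n))
    (EuclideanSpace ℝ (Fin m))
  have hFc : Continuous F :=
    e.symm.continuous.comp ((hcx.neg.prodMk hcy).comp e.continuous)
  have hF : ∀ a b, ⟪F a - F b, a - b⟫ ≤ 0 := by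
    intro a b
    -- Sum of the gradient inequalities of `S(·, y)` and `S(x, ·)` between `a` and `b`.
    have i1 := gx a.fst a.snd b.fst
    have i2 := gx b.fst b.snd a.fst
    have i3 := gy a.fst a.snd b.snd
    have i4 := gy b.fst b.snd a.snd
    simp only [hFdef, WithLp.prod_inner_apply, inner_sub_left, inner_neg_left,
      inner_sub_right, WithLp.ofLp_fst, WithLp.ofLp_snd] at i1 i2 i3 i4 ⊢
    linarith
  have hzs : F (WithLp.toLp 2 (xs, ys)) = 0 := by
    have hmin : gradient (fun x' => S x' ys) xs = 0 := by
      have : IsLocalMin (fun x' => S x' ys) xs := .of_forall fun x' => (hsaddle x' ys).2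
      simp [gradient, this.fderiv_eq_zero]
    have hmax : gradient (fun y' => S xs y') ys = 0 := by
      have : IsLocalMax (fun y' => S xs y') ys := .of_forall fun y' => (hsaddle xs y').1
      simp [gradient, this.fderiv_eq_zero]
    simp [hFdef, hmin, hmax]
  obtain ⟨p, hp, hlim⟩ := exists_tendsto_equilibrium hFc hF hzs (by
    intro w hw hw0
    have hpair : ∀ t, 0 ≤ t → HasDerivAt (fun t => e (w t)) (e (F (w t))) t := fun t ht =>
      e.toContinuousLinearMap.hasFDerivAt.comp_hasDerivAt t (hw t ht)
    have hw1 : ∀ t, 0 ≤ t → HasDerivAt (fun t => (w t).fst)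
        (-gradient (fun x' => S x' (w t).snd) (w t).fst) t := fun t ht =>
      (ContinuousLinearMap.fst ℝ (EuclideanSpace ℝ (Fin n))
        (EuclideanSpace ℝ (Fin m))).hasFDerivAt.comp_hasDerivAt t (hpair t ht)
    have hw2 : ∀ t, 0 ≤ t → HasDerivAt (fun t => (w t).snd)
        (gradient (fun y' => S (w t).fst y') (w t).snd) t := fun t ht =>
      (ContinuousLinearMap.snd ℝ (EuclideanSpace ℝ (Fin n))
        (EuclideanSpace ℝ (Fin m))).hasFDerivAt.comp_hasDerivAt t (hpair t ht)
    have hst := hobs (fun t => (w t).fst) (fun t => (w t).snd) hw1 hw2 (by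
      intro t ht
      -- `-⟪F w, w - zs⟫` dominates the sum of the two saddle gaps, each of which bounds one `hᵢ`.
      have h0 := hw0 t ht
      have i1 := gx (w t).fst (w t).snd xs
      have i2 := gy (w t).fst (w t).snd ys
      simp only [hFdef, WithLp.prod_inner_apply,
        inner_neg_left, inner_sub_right, WithLp.ofLp_fst, WithLp.ofLp_snd] at h0 i1 i2
      obtain ⟨b1, b2, b3, b4⟩ := hbound (w t).fst (w t).snd
      constructor <;> linarith) 0 le_rfl
    have e1 := (hw1 0 le_rfl).unique hst.1
    have e2 := (hw2 0 le_rfl).unique hst.2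
    simp only [hFdef]
    rw [e1, e2]
    rfl) (z := fun t => WithLp.toLp 2 (x t, y t)) (fun t ht =>
      e.symm.toContinuousLinearMap.hasFDerivAt.comp_hasDerivAt t ((hx t ht).prodMk (hy t ht)))
  have hp' := congrArg e hp
  have p1 : gradient (fun x' => S x' p.snd) p.fst = 0 := neg_eq_zero.1 (congrArg Prod.fst hp')
  have p2 : gradient (fun y' => S p.fst y') p.snd = 0 := congrArg Prod.snd hp'
  refine ⟨p.fst, p.snd, fun x' y' => ⟨?_, ?_⟩, (e.continuous.tendsto p).comp hlim⟩
  · simpa [p2] using gy p.fst p.snd y'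
  · simpa [p1] using gx p.fst p.snd x'
end

section
/- Let S : ℝⁿ × ℝᵐ → ℝ be convex-concave, continuously differentiable, and possess a saddle point. Assume in addition that S is strictly convex-concave, i.e., either x ↦ S(x,y) is strictly convex for every y ∈ ℝᵐ, or y ↦ S(x,y) is strictly concave for every x ∈ ℝⁿ. Then every trajectory (x(t), y(t)) of the saddle flow dynamics of S converges as t → ∞ to some saddle point (x∞, y∞) of S. -/
open Set Filter Topology RealInnerProductSpace

/-!
Let `(x*, y*)` be a saddle point and suppose `S` is strictly convex in `x` (the strictly concave
case follows by applying this one to `(y, x) ↦ -S x y`, whose saddle flow is the same).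
The function `V = ‖x - x*‖² + ‖y - y*‖²` satisfies `V' ≤ -2 W` along the flow, where
`W (x, y) = S x y* - S x* y ≥ 0`. Hence the trajectory is bounded, and therefore Lipschitz in
time because the gradients are bounded on bounded sets.

Invariance principles would require solving the flow from a limit point, and the vector field is
only continuous. A Barbalat-type argument (`nonpos_of_mapClusterPt`) is used instead:
if a scalar quantity converges along the trajectory and its derivative is at most `-φ`, then
`φ ≤ 0` at every cluster point. It is applied twice.

* To `V` with `φ = 2 W`: every cluster point `(x̄, ȳ)` has `W ≤ 0`, so `x̄` minimizes `S · y*`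
  and `S x* ȳ = S x* y*`; strict convexity gives `x̄ = x*`. In particular `x(t) → x*`.
* To `⟪g, x(t)⟫` with `g = ∇ₓS(x*, ȳ)` and `φ = ⟪g, ∇ₓS⟫`: this gives `‖g‖² ≤ 0`, so by convexity
  `x*` minimizes `S · ȳ`.

Thus every cluster point is a saddle point. The squared distance to one fixed cluster point is
then itself nonincreasing and clusters at `0`, so the trajectory converges.
-/

/-- The first-order (gradient) inequality for convex functions. -/
lemma convexOn_gradient_inequality {E : Type*} [NormedAddCommGroup E] [InnerProductSpace ℝ E]
    [CompleteSpace E] {f : E → ℝ} {g a : E} (hf : ConvexOn ℝ univ f) (hg : HasGradientAt f g a)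
    (b : E) : f a + ⟪g, b - a⟫ ≤ f b := by
  have hc : ConvexOn ℝ univ (f ∘ AffineMap.lineMap (k := ℝ) a b) := by
    simpa using hf.comp_affineMap (AffineMap.lineMap a b)
  have hd : HasDerivAt (f ∘ AffineMap.lineMap (k := ℝ) a b) ⟪g, b - a⟫ 0 := by
    have h1 : HasDerivAt (AffineMap.lineMap (k := ℝ) a b) (b - a) (0 : ℝ) :=
      AffineMap.hasDerivAt_lineMap
    have h2 : HasFDerivAt f (InnerProductSpace.toDual ℝ E g)
        (AffineMap.lineMap (k := ℝ) a b (0 : ℝ)) := by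
      simpa using hg.hasFDerivAt
    simpa using h2.comp_hasDerivAt (0 : ℝ) h1
  have := hc.le_slope_of_hasDerivAt (mem_univ 0) (mem_univ 1) one_pos hd
  simp [slope] at this
  linarith

/-- Barbalat-type principle: if `u` converges, `u' ≤ -φ ∘ z` with `z` Lipschitz in time, then
`φ ≤ 0` at cluster points of `z`. If `φ` were positive there, then each time `z` comes close to the
cluster point it would stay close for a fixed time span, and `u` would drop by a fixed amount. -/
lemma nonpos_of_mapClusterPt {Z : Type*} [PseudoMetricSpace Z] {u u' : ℝ → ℝ} {z : ℝ → Z}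
    {φ : Z → ℝ} {l : ℝ} {L : NNReal} {zb : Z}
    (hu : ∀ t, 0 ≤ t → HasDerivAt u (u' t) t) (hle : ∀ t, 0 ≤ t → u' t ≤ -φ (z t))
    (hl : Tendsto u atTop (𝓝 l)) (hz : LipschitzOnWith L z (Ici 0))
    (hzb : MapClusterPt zb atTop z) (hφ : ContinuousAt φ zb) : φ zb ≤ 0 := by
  by_contra! hc
  obtain ⟨ε, hε, hball⟩ := Metric.eventually_nhds_iff.1
    (hφ.eventually (lt_mem_nhds (half_lt_self hc)))
  have hL : (0 : ℝ) ≤ L := L.coe_nonneg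
  -- A time span during which `z` moves by less than `ε / 2`.
  set δ : ℝ := ε / (2 * (L + 1)) with hδ
  have hδ0 : 0 < δ := by positivity
  have hLδ : L * δ < ε / 2 := by
    have : (L + 1) * δ = ε / 2 := by rw [hδ]; field_simp
    nlinarith
  have hη : 0 < φ zb * δ / 8 := by positivity
  obtain ⟨T, hT⟩ := Metric.tendsto_atTop.1 hl _ hη
  obtain ⟨t, htz, ht⟩ := ((hzb.frequently (Metric.ball_mem_nhds zb (half_pos hε))).and_eventually
    (eventually_ge_atTop (max T 0))).exists
  have ht0 : 0 ≤ t := (le_max_right _ _).trans ht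
  have htT : T ≤ t := (le_max_left _ _).trans ht
  obtain ⟨s, hs, hs'⟩ := exists_hasDerivAt_eq_slope u u' (show t < t + δ by linarith)
    (fun r hr => (hu r (ht0.trans hr.1)).continuousAt.continuousWithinAt)
    (fun r hr => hu r (ht0.trans hr.1.le))
  have hs0 : 0 ≤ s := ht0.trans hs.1.le
  have h1 : dist (z s) (z t) ≤ L * δ := by
    refine (hz.dist_le_mul s hs0 t ht0).trans (mul_le_mul_of_nonneg_left ?_ hL)
    rw [Real.dist_eq, abs_of_pos (by linarith [hs.1])]
    linarith [hs.2]
  have h2 : dist (z s) zb < ε := by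
    have := dist_triangle (z s) (z t) zb
    have htz' : dist (z t) zb < ε / 2 := htz
    linarith
  have h3 := hball h2
  have h4 := hle s hs0
  have h5 : u (t + δ) - u t = u' s * δ := by
    rw [hs', add_sub_cancel_left, div_mul_cancel₀ _ hδ0.ne']
  have h6 := abs_lt.1 (hT t htT)
  have h7 := abs_lt.1 (hT (t + δ) (by linarith))
  nlinarith [h6.1, h6.2, h7.1, h7.2]

lemma tendsto_comp_of_forall_mapClusterPt {Z : Type*} [TopologicalSpace Z] {K : Set Z}
    (hK : IsCompact K) {z : ℝ → Z} (hz : ∀ᶠ t in atTop, z t ∈ K) {ψ : Z → ℝ} (hψ : Continuous ψ)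
    {c : ℝ} (hc : ∀ zb, MapClusterPt zb atTop z → ψ zb = c) :
    Tendsto (fun t => ψ (z t)) atTop (𝓝 c) := by
  refine tendsto_nhds.2 fun U hU hcU => ?_
  by_contra hne
  have hfr : ∃ᶠ t in atTop, z t ∈ K ∩ (ψ ⁻¹' U)ᶜ :=
    ((not_eventually.1 hne).and_eventually hz).mono fun t ht => ⟨ht.2, ht.1⟩
  obtain ⟨zb, hzb, hcl⟩ := (hK.inter_right
    (hU.preimage hψ).isClosed_compl).exists_mapClusterPt_of_frequently hfr
  exact hzb.2 (by rw [mem_preimage, hc zb hcl]; exact hcU)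

lemma tendsto_of_sq_norm_sub_le {G : Type*} [NormedAddCommGroup G] {w : ℝ → G} {b : G} {r : ℝ → ℝ}
    (hr : Tendsto r atTop (𝓝 0)) (hw : ∀ t, ‖w t - b‖ ^ 2 ≤ r t) : Tendsto w atTop (𝓝 b) := by
  rw [tendsto_iff_norm_sub_tendsto_zero]
  simpa using (squeeze_zero (fun t => sq_nonneg _) hw hr).sqrt

/-- Along the saddle flow, the squared distance to a saddle point decreases at rate at least
twice the gap `S x y* - S x* y`, and it converges. -/
lemma saddle_flow_lyapunov {E F : Type*} [NormedAddCommGroup E] [InnerProductSpace ℝ E]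
    [CompleteSpace E] [NormedAddCommGroup F] [InnerProductSpace ℝ F] [CompleteSpace F]
    {S : E → F → ℝ} {Gx : E → F → E} {Gy : E → F → F}
    (hconv : ∀ y, ConvexOn ℝ univ (fun x => S x y))
    (hconc : ∀ x, ConvexOn ℝ univ (fun y => -S x y))
    (hGx : ∀ x y, HasGradientAt (fun x' => S x' y) (Gx x y) x)
    (hGy : ∀ x y, HasGradientAt (fun y' => -S x y') (-Gy x y) y)
    {x : ℝ → E} {y : ℝ → F}
    (hx : ∀ t, 0 ≤ t → HasDerivAt x (-Gx (x t) (y t)) t)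
    (hy : ∀ t, 0 ≤ t → HasDerivAt y (Gy (x t) (y t)) t)
    {xs : E} {ys : F} (hs : ∀ x y, S xs y ≤ S xs ys ∧ S xs ys ≤ S x ys) :
    ∃ V' : ℝ → ℝ,
      (∀ t, 0 ≤ t → HasDerivAt (fun t => ‖x t - xs‖ ^ 2 + ‖y t - ys‖ ^ 2) (V' t) t) ∧
      (∀ t, 0 ≤ t → V' t ≤ -(2 * (S (x t) ys - S xs (y t)))) ∧
      AntitoneOn (fun t => ‖x t - xs‖ ^ 2 + ‖y t - ys‖ ^ 2) (Ici 0) ∧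
      ∃ l, Tendsto (fun t => ‖x t - xs‖ ^ 2 + ‖y t - ys‖ ^ 2) atTop (𝓝 l) := by
  have hd : ∀ t, 0 ≤ t → HasDerivAt (fun t => ‖x t - xs‖ ^ 2 + ‖y t - ys‖ ^ 2)
      (2 * ⟪x t - xs, -Gx (x t) (y t)⟫ + 2 * ⟪y t - ys, Gy (x t) (y t)⟫) t := fun t ht =>
    ((hx t ht).sub_const xs).norm_sq.add ((hy t ht).sub_const ys).norm_sq
  have hle : ∀ t, 0 ≤ t →
      2 * ⟪x t - xs, -Gx (x t) (y t)⟫ + 2 * ⟪y t - ys, Gy (x t) (y t)⟫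
        ≤ -(2 * (S (x t) ys - S xs (y t))) := by
    intro t _
    have h1 := convexOn_gradient_inequality (hconv (y t)) (hGx (x t) (y t)) xs
    have h2 := convexOn_gradient_inequality (hconc (x t)) (hGy (x t) (y t)) ys
    have e1 : ⟪x t - xs, -Gx (x t) (y t)⟫ = ⟪Gx (x t) (y t), xs - x t⟫ := by
      rw [real_inner_comm, ← neg_sub xs, inner_neg_neg]
    have e2 : ⟪y t - ys, Gy (x t) (y t)⟫ = ⟪-Gy (x t) (y t), ys - y t⟫ := by
      rw [real_inner_comm, ← neg_sub ys, inner_neg_right, inner_neg_left]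
    rw [e1, e2]
    linarith
  have hanti : AntitoneOn (fun t => ‖x t - xs‖ ^ 2 + ‖y t - ys‖ ^ 2) (Ici 0) := by
    refine antitoneOn_of_deriv_nonpos (convex_Ici 0)
      (fun t ht => (hd t ht).continuousAt.continuousWithinAt)
      (fun t ht => (hd t (interior_subset ht)).differentiableAt.differentiableWithinAt)
      (fun t ht => ?_)
    have ht' : 0 ≤ t := interior_subset ht
    rw [(hd t ht').deriv]
    have := hle t ht'
    have h1 := (hs (x t) (y t)).1
    have h2 := (hs (x t) (y t)).2
    linarith
  refine ⟨_, hd, hle, hanti, ?_⟩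
  have hA : Antitone (fun t => ‖x (max t 0) - xs‖ ^ 2 + ‖y (max t 0) - ys‖ ^ 2) :=
    fun a b hab => hanti (le_max_right a 0) (le_max_right b 0) (max_le_max_right 0 hab)
  refine ⟨_, (tendsto_atTop_ciInf hA ⟨0, ?_⟩).congr' ?_⟩
  · rintro _ ⟨t, rfl⟩
    positivity
  · filter_upwards [eventually_ge_atTop 0] with t ht
    rw [max_eq_left ht]

/-- Convergence of the saddle flow when `S` is strictly convex in the first variable; concavity in
the second variable is phrased as convexity of `-S x ·`, and `Gx`, `Gy` are the partial
gradients. -/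
lemma saddle_flow_converges_of_strictConvex {E F : Type*} [NormedAddCommGroup E]
    [InnerProductSpace ℝ E] [FiniteDimensional ℝ E] [NormedAddCommGroup F] [InnerProductSpace ℝ F]
    [FiniteDimensional ℝ F] {S : E → F → ℝ} {Gx : E → F → E} {Gy : E → F → F}
    (hconv : ∀ y, StrictConvexOn ℝ univ (fun x => S x y))
    (hconc : ∀ x, ConvexOn ℝ univ (fun y => -S x y))
    (hS : Continuous fun p : E × F => S p.1 p.2)
    (hGx : ∀ x y, HasGradientAt (fun x' => S x' y) (Gx x y) x)
    (hGy : ∀ x y, HasGradientAt (fun y' => -S x y') (-Gy x y) y)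
    (hGxc : Continuous fun p : E × F => Gx p.1 p.2)
    (hGyc : Continuous fun p : E × F => Gy p.1 p.2)
    {x : ℝ → E} {y : ℝ → F}
    (hx : ∀ t, 0 ≤ t → HasDerivAt x (-Gx (x t) (y t)) t)
    (hy : ∀ t, 0 ≤ t → HasDerivAt y (Gy (x t) (y t)) t)
    (hsaddle : ∃ xs ys, ∀ x y, S xs y ≤ S xs ys ∧ S xs ys ≤ S x ys) :
    ∃ xe ye, (∀ x' y', S xe y' ≤ S xe ye ∧ S xe ye ≤ S x' ye) ∧
      Tendsto (fun t => (x t, y t)) atTop (𝓝 (xe, ye)) := by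
  obtain ⟨xs, ys, hs⟩ := hsaddle
  have hconv' := fun y => (hconv y).convexOn
  obtain ⟨V', hV, hV', hanti, l, hl⟩ := saddle_flow_lyapunov hconv' hconc hGx hGy hx hy hs
  -- The sublevel set of the Lyapunov function in which the trajectory stays.
  set c : ℝ := ‖x 0 - xs‖ ^ 2 + ‖y 0 - ys‖ ^ 2 with hc
  set K : Set (E × F) := Metric.closedBall xs (√c) ×ˢ Metric.closedBall ys (√c) with hKdef
  have hK : IsCompact K := (isCompact_closedBall _ _).prod (isCompact_closedBall _ _)
  have hzK : ∀ t, 0 ≤ t → (x t, y t) ∈ K := by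
    intro t ht
    have h := hanti (mem_Ici.2 le_rfl) (mem_Ici.2 ht) ht
    simp only [← hc] at h
    refine ⟨?_, ?_⟩ <;> rw [Metric.mem_closedBall, dist_eq_norm] <;> apply Real.le_sqrt_of_sq_le
    · nlinarith [sq_nonneg ‖y t - ys‖]
    · nlinarith [sq_nonneg ‖x t - xs‖]
  have hlip : ∃ L : NNReal, LipschitzOnWith L (fun t => (x t, y t)) (Ici 0) := by
    obtain ⟨C, hC⟩ := hK.exists_bound_of_continuousOn
      (f := fun p : E × F => (-Gx p.1 p.2, Gy p.1 p.2)) (hGxc.neg.prodMk hGyc).continuousOn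
    refine ⟨C.toNNReal, (convex_Ici 0).lipschitzOnWith_of_nnnorm_hasDerivWithin_le
      (fun t ht => ((hx t ht).prodMk (hy t ht)).hasDerivWithinAt) fun t ht => ?_⟩
    exact NNReal.coe_le_coe.1 ((hC _ (hzK t ht)).trans (Real.le_coe_toNNReal C))
  obtain ⟨L, hlip⟩ := hlip
  have hcl1 : ∀ zb : E × F, MapClusterPt zb atTop (fun t => (x t, y t)) →
      zb.1 = xs ∧ S xs zb.2 = S xs ys := by
    intro zb hzb
    have hW := nonpos_of_mapClusterPt (φ := fun p : E × F => 2 * (S p.1 ys - S xs p.2))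
      hV hV' hl hlip hzb (by
        have h1 : Continuous fun p : E × F => S p.1 ys :=
          hS.comp (continuous_fst.prodMk continuous_const)
        have h2 : Continuous fun p : E × F => S xs p.2 :=
          hS.comp (continuous_const.prodMk continuous_snd)
        fun_prop)
    have h1 := (hs zb.1 zb.2).1
    have h2 := (hs zb.1 zb.2).2
    refine ⟨(hconv ys).eq_of_isMinOn (fun w _ => ?_) (fun w _ => ?_) (mem_univ _) (mem_univ _),
      by linarith⟩
    · have := (hs w ys).2
      exact (show S zb.1 ys ≤ S w ys by linarith)
    · exact (hs w ys).2
  obtain ⟨zb, -, hzb⟩ := hK.exists_mapClusterPt_of_frequently (l := atTop)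
    (f := fun t => (x t, y t)) ((eventually_ge_atTop 0).mono hzK).frequently
  obtain ⟨xb, yb⟩ := zb
  obtain ⟨hxb, hyb⟩ := hcl1 _ hzb
  simp only at hxb hyb
  subst hxb
  have hg : Gx xb yb = 0 := by
    have hlim : Tendsto (fun t => ⟪Gx xb yb, x t⟫) atTop (𝓝 ⟪Gx xb yb, xb⟫) :=
      tendsto_comp_of_forall_mapClusterPt hK ((eventually_ge_atTop 0).mono hzK)
        (ψ := fun p : E × F => ⟪Gx xb yb, p.1⟫) (by fun_prop)
        fun w hw => by rw [(hcl1 w hw).1]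
    have := nonpos_of_mapClusterPt (φ := fun p : E × F => ⟪Gx xb yb, Gx p.1 p.2⟫)
      (fun t ht => (hasDerivAt_const t (Gx xb yb)).inner ℝ (hx t ht))
      (fun t _ => by simp) hlim hlip hzb (by fun_prop)
    simpa using this
  have hse : ∀ x' y', S xb y' ≤ S xb yb ∧ S xb yb ≤ S x' yb := by
    intro x' y'
    refine ⟨hyb ▸ (hs x' y').1, ?_⟩
    have := convexOn_gradient_inequality (hconv' yb) (hGx xb yb) x'
    simpa [hg] using this
  refine ⟨xb, yb, hse, ?_⟩
  -- The distance to the cluster point converges, and its limit must be the cluster value `0`.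
  obtain ⟨-, -, -, -, l', hl'⟩ := saddle_flow_lyapunov hconv' hconc hGx hGy hx hy hse
  have hcont : Continuous fun p : E × F => ‖p.1 - xb‖ ^ 2 + ‖p.2 - yb‖ ^ 2 := by fun_prop
  have hl0 : l' = 0 := by
    have h := hzb.continuousAt_comp hcont.continuousAt
    have h' : MapClusterPt (0 : ℝ) atTop (fun t => ‖x t - xb‖ ^ 2 + ‖y t - yb‖ ^ 2) := by
      simpa [Function.comp_def] using h
    exact (eq_of_nhds_neBot (h'.neBot.mono (inf_le_inf_left _ hl'))).symm
  rw [hl0] at hl'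
  refine Tendsto.prodMk_nhds ?_ ?_
  · exact tendsto_of_sq_norm_sub_le hl' fun t => by linarith [sq_nonneg ‖y t - yb‖]
  · exact tendsto_of_sq_norm_sub_le hl' fun t => by linarith [sq_nonneg ‖x t - xb‖]

/-- If `S` is convex-concave, continuously differentiable, possesses a
saddle point, and is in addition strictly convex-concave (either strictly convex in `x`
for every `y`, or strictly concave in `y` for every `x`), then every trajectory of the
saddle flow dynamics of `S` converges to some saddle point of `S`. -/
theorem saddle_flow_asymptotic_convergence_of_strict_convex_concave {n m : ℕ}
    (S : EuclideanSpace ℝ (Fin n) → EuclideanSpace ℝ (Fin m) → ℝ)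
    (hconv : ∀ y, ConvexOn ℝ univ (fun x => S x y))
    (hconc : ∀ x, ConcaveOn ℝ univ (fun y => S x y))
    (hC1 : ContDiff ℝ 1
      (fun p : EuclideanSpace ℝ (Fin n) × EuclideanSpace ℝ (Fin m) => S p.1 p.2))
    (hsaddle : ∃ (xs : EuclideanSpace ℝ (Fin n)) (ys : EuclideanSpace ℝ (Fin m)),
      ∀ x y, S xs y ≤ S xs ys ∧ S xs ys ≤ S x ys)
    (hstrict : (∀ y, StrictConvexOn ℝ univ (fun x => S x y)) ∨
      (∀ x, StrictConcaveOn ℝ univ (fun y => S x y)))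
    (x : ℝ → EuclideanSpace ℝ (Fin n)) (y : ℝ → EuclideanSpace ℝ (Fin m))
    (hx : ∀ t, 0 ≤ t → HasDerivAt x (-(gradient (fun x' => S x' (y t)) (x t))) t)
    (hy : ∀ t, 0 ≤ t → HasDerivAt y (gradient (fun y' => S (x t) y') (y t)) t) :
    ∃ (xe : EuclideanSpace ℝ (Fin n)) (ye : EuclideanSpace ℝ (Fin m)),
      (∀ x' y', S xe y' ≤ S xe ye ∧ S xe ye ≤ S x' ye) ∧
      Tendsto (fun t => (x t, y t)) atTop (𝓝 (xe, ye)) := by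
  -- Differentiability and continuity of the partial gradients, from joint `C¹` regularity.
  set f : EuclideanSpace ℝ (Fin n) × EuclideanSpace ℝ (Fin m) → ℝ := fun p => S p.1 p.2 with hf
  have hdx : ∀ a b, HasFDerivAt (fun x' => S x' b)
      ((fderiv ℝ f (a, b)).comp (ContinuousLinearMap.inl ℝ _ _)) a := fun a b =>
    HasFDerivAt.comp (g := f) (f := fun x' => (x', b)) a (hC1.differentiable one_ne_zero (a, b)).hasFDerivAt
      (hasFDerivAt_prodMk_left a b)
  have hdy : ∀ a b, HasFDerivAt (fun y' => S a y')
      ((fderiv ℝ f (a, b)).comp (ContinuousLinearMap.inr ℝ _ _)) b := fun a b =>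
    HasFDerivAt.comp (g := f) (f := fun y' => (a, y')) b (hC1.differentiable one_ne_zero (a, b)).hasFDerivAt
      (hasFDerivAt_prodMk_right a b)
  have hfc : Continuous (fderiv ℝ f) := hC1.continuous_fderiv one_ne_zero
  have hGx : ∀ a b, HasGradientAt (fun x' => S x' b) (gradient (fun x' => S x' b) a) a :=
    fun a b => (hdx a b).differentiableAt.hasGradientAt
  have hGy : ∀ a b, HasGradientAt (fun y' => S a y') (gradient (fun y' => S a y') b) b :=
    fun a b => (hdy a b).differentiableAt.hasGradientAt
  have hneg : ∀ {E : Type} [NormedAddCommGroup E] [InnerProductSpace ℝ E] [CompleteSpace E]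
      {h : E → ℝ} {g a : E}, HasGradientAt h g a → HasGradientAt (fun w => -h w) (-g) a := by
    intro E _ _ _ h g a hh
    rw [hasGradientAt_iff_hasFDerivAt, map_neg]
    exact hh.hasFDerivAt.neg
  have hGxc : Continuous fun p : EuclideanSpace ℝ (Fin n) × EuclideanSpace ℝ (Fin m) =>
      gradient (fun x' => S x' p.2) p.1 := by
    simp only [gradient, fun p : EuclideanSpace ℝ (Fin n) × EuclideanSpace ℝ (Fin m) =>
      (hdx p.1 p.2).fderiv]
    exact (LinearIsometryEquiv.continuous _).comp (hfc.clm_comp continuous_const)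
  have hGyc : Continuous fun p : EuclideanSpace ℝ (Fin n) × EuclideanSpace ℝ (Fin m) =>
      gradient (fun y' => S p.1 y') p.2 := by
    simp only [gradient, fun p : EuclideanSpace ℝ (Fin n) × EuclideanSpace ℝ (Fin m) =>
      (hdy p.1 p.2).fderiv]
    exact (LinearIsometryEquiv.continuous _).comp (hfc.clm_comp continuous_const)
  rcases hstrict with hst | hst
  · exact saddle_flow_converges_of_strictConvex hst (fun a => (hconc a).neg) hC1.continuous
      hGx (fun a b => hneg (hGy a b)) hGxc hGyc hx hy hsaddle
  -- Exchange the two players: `(y, x) ↦ -S x y` has the same saddle flow.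
  · obtain ⟨xs, ys, hs⟩ := hsaddle
    obtain ⟨ye, xe, he, hlim⟩ := saddle_flow_converges_of_strictConvex
      (S := fun b a => -S a b) (Gx := fun b a => -gradient (fun y' => S a y') b)
      (Gy := fun b a => -gradient (fun x' => S x' b) a) (x := y) (y := x)
      (fun a => (hst a).neg) (fun b => by simpa using hconv b)
      (hC1.continuous.comp continuous_swap).neg (fun b a => hneg (hGy a b))
      (fun b a => by simpa using hGx a b)
      (hGyc.comp continuous_swap).neg (hGxc.comp continuous_swap).neg
      (fun t ht => by simpa using hy t ht) hx
      ⟨ys, xs, fun b a => ⟨neg_le_neg (hs a b).2, neg_le_neg (hs a b).1⟩⟩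
    refine ⟨xe, ye, fun a b => ⟨neg_le_neg_iff.1 (he b a).2, neg_le_neg_iff.1 (he b a).1⟩, ?_⟩
    exact (continuous_swap.tendsto (ye, xe)).comp hlim
end

section
/- Let S : ℝⁿ × ℝᵐ → ℝ be convex-concave and continuously differentiable, let ρ > 0, and let S̃(u,y) := inf over x ∈ ℝⁿ of { S(x,y) + (ρ/2)‖x − u‖² } (for each (u,y) this infimum is attained at a unique point, since the minimized function is ρ-strongly convex and continuous). Then a point (x*, y*) is a saddle point of S if and only if (u*, y*) with u* = x* is a saddle point of S̃. -/
/-!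
For fixed `y`, the function `u ↦ S̃(u, y)` is the Moreau envelope of `S(·, y)`; it lies below
`S(·, y)`, and it is a genuine infimum because a continuous convex function decreases at most
linearly (`ConvexOn.exists_affine_lower_bound`), so that the quadratic term dominates.

If `(x*, y*)` is a saddle point of `S`, then `x*` minimizes `S(·, y*)`, hence
`S̃(x*, y*) = S(x*, y*) ≤ S̃(u, y*)`, while `S̃(x*, y) ≤ S(x*, y) ≤ S(x*, y*)`.

Conversely, let `(x*, y*)` be a saddle point of `S̃`. A near-minimizer `p` of the problem defining
`S̃(x*, y*)` satisfies `S̃(x*, y*) ≤ S̃(p, y*) ≤ S(p, y*)`, which forces `p` to be close to `x*`;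
in the limit `S(x*, y*) ≤ S̃(x*, y*)`, so `x*` minimizes `S(·, y*)`. For the maximum in `y`, take
a `t²`-minimizer `x_t` of the problem defining `S̃(x*, y_t)` with `y_t = (1 - t) y* + t y`.
Concavity of `S(x_t, ·)` gives
`(1 - t) S(x_t, y*) + t S(x_t, y) + ρ/2 ‖x_t - x*‖² ≤ S(x*, y*) + t²`. Since
`S(x*, y*) ≤ S(x_t, y*)`, this yields both `x_t → x*` and `S(x_t, y) ≤ S(x*, y*) + t`, and
`t → 0` gives the claim. Both limits are instances of `le_of_approx_points`.
-/

open Set Filter Topology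

/-- With `δ` such that `f > f a - 1` on the `δ`-ball around `a`, convexity along the segment from
`a` to `x` gives slope `L = 1 / δ`. -/
lemma ConvexOn.exists_affine_lower_bound {E : Type*} [NormedAddCommGroup E] [NormedSpace ℝ E]
    {f : E → ℝ} (hf : ConvexOn ℝ univ f) (hc : Continuous f) (a : E) :
    ∃ L : ℝ, ∀ x, f a - 1 - L * ‖x - a‖ ≤ f x := by
  obtain ⟨δ, hδ, hball⟩ := Metric.continuousAt_iff.1 (hc.continuousAt (x := a)) 1 one_pos
  refine ⟨1 / δ, fun x => ?_⟩
  set r := ‖x - a‖ with hr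
  have hr0 : 0 ≤ r := norm_nonneg _
  have hpos : 0 < δ + r := by linarith
  -- This `s` keeps the point `(1 - s) a + s x` at distance `δ r / (δ + r) < δ` from `a`.
  set s := δ / (δ + r) with hs
  have hs0 : 0 < s := div_pos hδ hpos
  have hs1 : s ≤ 1 := (div_le_one hpos).2 (by linarith)
  have hdist : dist ((1 - s) • a + s • x) a < δ := by
    have h : (1 - s) • a + s • x - a = s • (x - a) := by module
    rw [dist_eq_norm, h, norm_smul, Real.norm_of_nonneg hs0.le, ← hr, hs, div_mul_eq_mul_div,
      div_lt_iff₀ hpos]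
    nlinarith
  have hnear := hball hdist
  rw [Real.dist_eq, abs_lt] at hnear
  have hconv := hf.2 (mem_univ a) (mem_univ x) (sub_nonneg.2 hs1) hs0.le (by ring)
  simp only [smul_eq_mul] at hconv
  have hinv : s * (1 + 1 / δ * r) = 1 := by
    rw [hs]; field_simp
  have : 0 ≤ s * (f x - (f a - 1 - 1 / δ * r)) := by
    have : s * (f x - (f a - 1 - 1 / δ * r)) = s * (f x - f a) + s * (1 + 1 / δ * r) := by ring
    rw [this, hinv]; linarith [hnear.1]
  linarith [nonneg_of_mul_nonneg_right this hs0]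

/-- The Moreau envelope of a continuous convex function is the infimum of a set that is bounded
below. -/
lemma bddBelow_add_sq {E : Type*} [NormedAddCommGroup E] [NormedSpace ℝ E]
    {f : E → ℝ} (hf : ConvexOn ℝ univ f) (hc : Continuous f) {ρ : ℝ} (hρ : 0 < ρ) (u : E) :
    BddBelow (range fun x => f x + ρ / 2 * ‖x - u‖ ^ 2) := by
  obtain ⟨L, hL⟩ := hf.exists_affine_lower_bound hc u
  -- Completing the square: `ρ/2 r² - L r ≥ -L² / (2ρ)`.
  refine ⟨f u - 1 - L ^ 2 / (2 * ρ), ?_⟩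
  rintro _ ⟨x, rfl⟩
  have hsq : 0 ≤ ρ / 2 * (‖x - u‖ - L / ρ) ^ 2 := by positivity
  have hexp : ρ / 2 * (‖x - u‖ - L / ρ) ^ 2
      = ρ / 2 * ‖x - u‖ ^ 2 - L * ‖x - u‖ + L ^ 2 / (2 * ρ) := by
    field_simp
    ring
  linarith [hL x]

lemma le_of_approx_points {E : Type*} [NormedAddCommGroup E] {f : E → ℝ} (hc : Continuous f)
    {a : E} {c K : ℝ}
    (h : ∀ t : ℝ, 0 < t → t ≤ 1 → ∃ x, ‖x - a‖ ^ 2 ≤ K * t ∧ f x ≤ c + t) : f a ≤ c := by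
  have hex : ∀ n : ℕ, ∃ x, ‖x - a‖ ^ 2 ≤ K * (1 / ((n : ℝ) + 1)) ∧ f x ≤ c + 1 / ((n : ℝ) + 1) :=
    fun n => h _ Nat.one_div_pos_of_nat
      ((div_le_one (by positivity)).2 (by linarith [n.cast_nonneg (α := ℝ)]))
  choose x hx hfx using hex
  have ht := tendsto_one_div_add_atTop_nhds_zero_nat (𝕜 := ℝ)
  have hsq : Tendsto (fun n => ‖x n - a‖ ^ 2) atTop (𝓝 0) :=
    squeeze_zero (fun n => by positivity) hx (by simpa using ht.const_mul K)
  have hnorm : Tendsto (fun n => ‖x n - a‖) atTop (𝓝 0) := by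
    simpa [Real.sqrt_sq] using hsq.sqrt
  have hlim : Tendsto x atTop (𝓝 a) := tendsto_iff_norm_sub_tendsto_zero.2 hnorm
  exact le_of_tendsto_of_tendsto' ((hc.tendsto a).comp hlim)
    (by simpa using ht.const_add c) hfx

/-- For a convex-concave, continuously differentiable `S` and `ρ > 0`,
with proximal surrogate `S̃(u,y) = ⨅ x, S x y + (ρ/2)‖x - u‖²`, a point `(xs, ys)` is
a saddle point of `S` if and only if `(us, ys)` with `us = xs` is a saddle point of `S̃`. -/
theorem proximal_surrogate_saddle_point_iff {n m : ℕ}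
    (S : EuclideanSpace ℝ (Fin n) → EuclideanSpace ℝ (Fin m) → ℝ)
    (ρ : ℝ) (hρ : 0 < ρ)
    (hconv : ∀ y, ConvexOn ℝ univ (fun x => S x y))
    (hconc : ∀ x, ConcaveOn ℝ univ (fun y => S x y))
    (hC1 : ContDiff ℝ 1
      (fun p : EuclideanSpace ℝ (Fin n) × EuclideanSpace ℝ (Fin m) => S p.1 p.2))
    (St : EuclideanSpace ℝ (Fin n) → EuclideanSpace ℝ (Fin m) → ℝ)
    (hSt : ∀ u y, St u y =
      ⨅ x : EuclideanSpace ℝ (Fin n), (S x y + ρ / 2 * ‖x - u‖ ^ 2))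
    (xs : EuclideanSpace ℝ (Fin n)) (ys : EuclideanSpace ℝ (Fin m)) :
    (∀ x y, S xs y ≤ S xs ys ∧ S xs ys ≤ S x ys) ↔
    (∀ u y, St xs y ≤ St xs ys ∧ St xs ys ≤ St u ys) := by
  have hcx : ∀ y, Continuous fun x => S x y := fun y =>
    hC1.continuous.comp (continuous_id.prodMk continuous_const)
  have hbdd := fun u y => bddBelow_add_sq (hconv y) (hcx y) hρ u
  have hle : ∀ u y x, St u y ≤ S x y + ρ / 2 * ‖x - u‖ ^ 2 := fun u y x => by
    rw [hSt]; exact ciInf_le (hbdd u y) x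
  have hle_self : ∀ u y, St u y ≤ S u y := fun u y => by simpa using hle u y u
  have hnear : ∀ u y ε, 0 < ε → ∃ x, S x y + ρ / 2 * ‖x - u‖ ^ 2 < St u y + ε :=
    fun u y ε hε => exists_lt_of_ciInf_lt (by rw [← hSt]; linarith)
  constructor
  · intro h
    have hlow : ∀ u, S xs ys ≤ St u ys := fun u => by
      rw [hSt]
      refine le_ciInf fun x => ?_
      have : 0 ≤ ρ / 2 * ‖x - u‖ ^ 2 := by positivity
      linarith [(h x ys).2]
    exact fun u y => ⟨(hle_self xs y).trans ((h xs y).1.trans (hlow xs)),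
      (hle_self xs ys).trans (hlow u)⟩
  · intro h
    have henv : S xs ys ≤ St xs ys := by
      refine le_of_approx_points (hcx ys) (K := 2 / ρ) fun t ht _ => ?_
      obtain ⟨p, hp⟩ := hnear xs ys t ht
      have hmin : St xs ys ≤ S p ys := (h p ys).2.trans (hle_self p ys)
      refine ⟨p, ?_, ?_⟩
      · rw [div_mul_eq_mul_div, le_div_iff₀ hρ]
        linarith
      · have : 0 ≤ ρ / 2 * ‖p - xs‖ ^ 2 := by positivity
        linarith
    have hmin : ∀ x, S xs ys ≤ S x ys := fun x =>
      henv.trans ((h x ys).2.trans (hle_self x ys))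
    refine fun x y => ⟨?_, hmin x⟩
    obtain ⟨L, hL⟩ := (hconv y).exists_affine_lower_bound (hcx y) xs
    refine le_of_approx_points (hcx y)
      (K := 4 / ρ * (S xs ys - S xs y + 2 + L ^ 2 / ρ)) fun t ht ht1 => ?_
    obtain ⟨p, hp⟩ := hnear xs ((1 - t) • ys + t • y) (t ^ 2) (by positivity)
    have hconcave := (hconc p).2 (mem_univ ys) (mem_univ y) (sub_nonneg.2 ht1) ht.le (by ring)
    simp only [smul_eq_mul] at hconcave
    have hmax : St xs ((1 - t) • ys + t • y) ≤ S xs ys :=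
      (h xs _).1.trans (hle_self xs ys)
    have hys : (1 - t) * S xs ys ≤ (1 - t) * S p ys :=
      mul_le_mul_of_nonneg_left (hmin p) (sub_nonneg.2 ht1)
    have hmain : ρ / 2 * ‖p - xs‖ ^ 2 + t * S p y ≤ t * S xs ys + t ^ 2 := by linarith
    refine ⟨p, ?_, ?_⟩
    · have hlow := mul_le_mul_of_nonneg_left (hL p) ht.le
      have ht2 : t ^ 2 ≤ t := by nlinarith
      -- Young's inequality absorbs the linear term: `t L r ≤ ρ/4 r² + t² L² / ρ`.
      have hsq : 0 ≤ ρ / 4 * (‖p - xs‖ - 2 * t * L / ρ) ^ 2 := by positivity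
      have hexp : ρ / 4 * (‖p - xs‖ - 2 * t * L / ρ) ^ 2
          = ρ / 4 * ‖p - xs‖ ^ 2 - t * (L * ‖p - xs‖) + t ^ 2 * (L ^ 2 / ρ) := by
        field_simp
        ring
      have hLt : t ^ 2 * (L ^ 2 / ρ) ≤ t * (L ^ 2 / ρ) :=
        mul_le_mul_of_nonneg_right ht2 (by positivity)
      rw [mul_assoc, div_mul_eq_mul_div, le_div_iff₀ hρ]
      linarith
    · have : 0 ≤ ρ / 2 * ‖p - xs‖ ^ 2 := by positivity
      refine le_of_mul_le_mul_left ?_ ht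
      linarith
end

section
/- Let S : ℝⁿ × ℝᵐ → ℝ be continuously differentiable, μ-strongly convex in x and q-strongly concave in y (μ, q > 0), and let z* = (x*, y*) be a saddle point of S. Then every trajectory z(t) = (x(t), y(t)) of the saddle flow dynamics of S satisfies ‖z(t) − z*‖ ≤ ‖z(0) − z*‖ · e^{−ct} for all t ≥ 0, with rate c = min{μ, q} > 0. -/
/-!
The squared distance `W(t) = ‖x t - xs‖² + ‖y t - ys‖²` is a Lyapunov function. Its derivative is
`2 (-⟪x - xs, ∇ₓS⟫ + ⟪y - ys, ∇_yS⟫)`. The first-order strong convexity and concavity inequalities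
(`strong_convex_first_order`) at `(x, y)` bound half of it by
`S xs y - S x ys - μ/2 ‖x - xs‖² - q/2 ‖y - ys‖²`.
At the saddle point the partial gradients vanish, so the same inequalities give quadratic growth
(`strong_convex_quadratic_growth`), which bounds `S xs y - S x ys` by
`-μ/2 ‖x - xs‖² - q/2 ‖y - ys‖²`. Hence `W' ≤ -2 (min μ q) W`, and multiplying by
the integrating factor `exp (2 (min μ q) t)` (`le_mul_exp_of_deriv_le`) gives exponential decay.
-/

open Set Filter Topology

section Convexity

variable {E : Type*} [NormedAddCommGroup E] [InnerProductSpace ℝ E]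

/-- Restricting to the line from `a` to `b` reduces the gradient inequality to the comparison of
the derivative of a convex function of one variable with its slope. -/
lemma strong_convex_first_order [CompleteSpace E] {f : E → ℝ} {μ : ℝ}
    (hf : ConvexOn ℝ univ (fun x => f x - μ / 2 * ‖x‖ ^ 2)) {a g : E}
    (hg : HasGradientAt f g a) (b : E) :
    f a + inner ℝ g (b - a) + μ / 2 * ‖b - a‖ ^ 2 ≤ f b := by
  have hline : HasDerivAt (fun t : ℝ => AffineMap.lineMap a b t) (b - a) (0 : ℝ) :=
    AffineMap.hasDerivAt_lineMap
  have hconv := hf.comp_affineMap (AffineMap.lineMap (k := ℝ) a b)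
  have h1 : HasDerivAt (fun t : ℝ => f (AffineMap.lineMap a b t)) (inner ℝ g (b - a)) 0 := by
    have hfd : HasFDerivAt f (InnerProductSpace.toDual ℝ E g) (AffineMap.lineMap a b (0 : ℝ)) := by
      simpa using hg.hasFDerivAt
    exact (hfd.comp_hasDerivAt (0 : ℝ) hline).congr_deriv (by simp)
  have h2 : HasDerivAt
      ((fun x => f x - μ / 2 * ‖x‖ ^ 2) ∘ (AffineMap.lineMap (k := ℝ) a b))
      (inner ℝ g (b - a) - μ / 2 * (2 * inner ℝ a (b - a))) 0 := by
    exact (h1.sub (hline.norm_sq.const_mul (μ / 2))).congr_deriv (by simp)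
  have h3 := hconv.le_slope_of_hasDerivAt (x := 0) (y := 1) (by simp) (by simp) one_pos h2
  simp only [slope_def_field, Function.comp, AffineMap.lineMap_apply_one,
    AffineMap.lineMap_apply_zero] at h3
  have h4 := norm_sub_sq_real b a
  rw [inner_sub_right a b a, real_inner_self_eq_norm_sq, real_inner_comm b a, sub_zero,
    div_one] at h3
  rw [h4]
  linarith

lemma strong_convex_quadratic_growth [CompleteSpace E] {f : E → ℝ} {μ : ℝ}
    (hf : ConvexOn ℝ univ (fun x => f x - μ / 2 * ‖x‖ ^ 2)) {a : E}
    (hd : DifferentiableAt ℝ f a) (hmin : ∀ b, f a ≤ f b) (b : E) :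
    f a + μ / 2 * ‖b - a‖ ^ 2 ≤ f b := by
  have hloc : IsLocalMin f a := Filter.Eventually.of_forall hmin
  have hg : HasGradientAt f 0 a := by
    rw [hasGradientAt_iff_hasFDerivAt, map_zero, ← hloc.fderiv_eq_zero]
    exact hd.hasFDerivAt
  simpa using strong_convex_first_order hf hg b

end Convexity

/-- Grönwall's inequality in differential form, with a constant rate. -/
lemma le_mul_exp_of_deriv_le {W W' : ℝ → ℝ} {k : ℝ}
    (hW : ∀ t, 0 ≤ t → HasDerivAt W (W' t) t) (hle : ∀ t, 0 ≤ t → W' t ≤ -k * W t)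
    {t : ℝ} (ht : 0 ≤ t) : W t ≤ W 0 * Real.exp (-k * t) := by
  have hder : ∀ s, 0 ≤ s → HasDerivAt (fun s => Real.exp (k * s) * W s)
      (Real.exp (k * s) * (k * W s + W' s)) s := fun s hs => by
    have he : HasDerivAt (fun s => Real.exp (k * s)) (Real.exp (k * s) * (k * 1)) s :=
      ((hasDerivAt_id s).const_mul k).exp
    exact (he.mul (hW s hs)).congr_deriv (by ring)
  have hanti : AntitoneOn (fun s => Real.exp (k * s) * W s) (Ici 0) := by
    refine antitoneOn_of_deriv_nonpos (convex_Ici 0)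
      (fun s hs => (hder s hs).continuousAt.continuousWithinAt)
      (fun s hs => (hder s (interior_subset hs)).differentiableAt.differentiableWithinAt)
      (fun s hs => ?_)
    have hs' : 0 ≤ s := interior_subset hs
    rw [(hder s hs').deriv]
    exact mul_nonpos_of_nonneg_of_nonpos (Real.exp_pos _).le (by linarith [hle s hs'])
  have h := hanti (mem_Ici.2 le_rfl) (mem_Ici.2 ht) ht
  simp only [mul_zero, Real.exp_zero, one_mul] at h
  rw [neg_mul, Real.exp_neg, ← div_eq_mul_inv, le_div_iff₀ (Real.exp_pos _)]
  linarith

/-- If `S` is continuously differentiable, `μ`-strongly convex in `x` and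
`q`-strongly concave in `y`, and `(xs, ys)` is a saddle point of `S`, then every
trajectory of the saddle flow dynamics converges exponentially to `(xs, ys)` with rate
`c = min μ q`. -/
theorem saddle_flow_exponential_convergence {n m : ℕ}
    (S : EuclideanSpace ℝ (Fin n) → EuclideanSpace ℝ (Fin m) → ℝ)
    (μ q : ℝ) (hμ : 0 < μ) (hq : 0 < q)
    (hC1 : ContDiff ℝ 1
      (fun p : EuclideanSpace ℝ (Fin n) × EuclideanSpace ℝ (Fin m) => S p.1 p.2))
    (hsc : ∀ y, ConvexOn ℝ univ (fun x => S x y - μ / 2 * ‖x‖ ^ 2))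
    (hscc : ∀ x, ConvexOn ℝ univ (fun y => -S x y - q / 2 * ‖y‖ ^ 2))
    (xs : EuclideanSpace ℝ (Fin n)) (ys : EuclideanSpace ℝ (Fin m))
    (hsaddle : ∀ x y, S xs y ≤ S xs ys ∧ S xs ys ≤ S x ys)
    (x : ℝ → EuclideanSpace ℝ (Fin n)) (y : ℝ → EuclideanSpace ℝ (Fin m))
    (hx : ∀ t, 0 ≤ t → HasDerivAt x (-(gradient (fun x' => S x' (y t)) (x t))) t)
    (hy : ∀ t, 0 ≤ t → HasDerivAt y (gradient (fun y' => S (x t) y') (y t)) t) :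
    ∀ t, 0 ≤ t →
      Real.sqrt (‖x t - xs‖ ^ 2 + ‖y t - ys‖ ^ 2) ≤
        Real.sqrt (‖x 0 - xs‖ ^ 2 + ‖y 0 - ys‖ ^ 2) * Real.exp (-(min μ q) * t) := by
  have hdiff := hC1.differentiable one_ne_zero
  have hdx : ∀ a b, DifferentiableAt ℝ (fun x' => S x' b) a := fun a b =>
    (hdiff (a, b)).comp (f := fun x' => (x', b)) a (by fun_prop)
  have hdy : ∀ a b, DifferentiableAt ℝ (fun y' => S a y') b := fun a b =>
    (hdiff (a, b)).comp (f := fun y' => (a, y')) b (by fun_prop)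
  have hneg : ∀ a b, HasGradientAt (fun y' => -S a y') (-gradient (fun y' => S a y') b) b :=
    fun a b => by
      rw [hasGradientAt_iff_hasFDerivAt, map_neg]
      exact (hdy a b).hasGradientAt.hasFDerivAt.neg
  intro t ht
  have hW : ∀ s, 0 ≤ s → HasDerivAt (fun s => ‖x s - xs‖ ^ 2 + ‖y s - ys‖ ^ 2)
      (2 * inner ℝ (x s - xs) (-(gradient (fun x' => S x' (y s)) (x s)))
        + 2 * inner ℝ (y s - ys) (gradient (fun y' => S (x s) y') (y s))) s := fun s hs =>
    ((hx s hs).sub_const xs).norm_sq.add ((hy s hs).sub_const ys).norm_sq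
  have hle : ∀ s, 0 ≤ s →
      2 * inner ℝ (x s - xs) (-(gradient (fun x' => S x' (y s)) (x s)))
        + 2 * inner ℝ (y s - ys) (gradient (fun y' => S (x s) y') (y s))
      ≤ -(2 * min μ q) * (‖x s - xs‖ ^ 2 + ‖y s - ys‖ ^ 2) := by
    intro s _
    have h1 := strong_convex_first_order (hsc (y s)) (hdx (x s) (y s)).hasGradientAt xs
    have h2 := strong_convex_first_order (hscc (x s)) (hneg (x s) (y s)) ys
    have h3 := strong_convex_quadratic_growth (hsc ys) (hdx xs ys)
      (fun b => (hsaddle b ys).2) (x s)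
    have h4 := strong_convex_quadratic_growth (hscc xs) (hdy xs ys).neg
      (fun b => neg_le_neg (hsaddle xs b).1) (y s)
    rw [← neg_sub (x s) xs, norm_neg, inner_neg_right, real_inner_comm] at h1
    rw [← neg_sub (y s) ys, norm_neg, inner_neg_neg, real_inner_comm] at h2
    rw [inner_neg_right]
    have h5 := mul_le_mul_of_nonneg_right (min_le_left μ q) (sq_nonneg ‖x s - xs‖)
    have h6 := mul_le_mul_of_nonneg_right (min_le_right μ q) (sq_nonneg ‖y s - ys‖)
    linarith
  have hmain := le_mul_exp_of_deriv_le hW hle ht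
  refine (Real.sqrt_le_sqrt hmain).trans_eq ?_
  have hexp : Real.exp (-(2 * min μ q) * t) = Real.exp (-(min μ q) * t) ^ 2 := by
    rw [← Real.exp_nat_mul]; push_cast; ring_nf
  rw [Real.sqrt_mul (by positivity), hexp, Real.sqrt_sq (Real.exp_pos _).le]
end

section
/- Let f : ℝⁿ → ℝ be μ-strongly convex (μ > 0) and let ρ > 0. Then the Moreau envelope e(u) := inf over x ∈ ℝⁿ of { f(x) + (ρ/2)‖x − u‖² } is a real-valued function on ℝⁿ that is (μρ/(μ+ρ))-strongly convex. -/
/-!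
The objective stays jointly convex in `(x, u)` after `(μρ/(μ+ρ)/2)‖u‖²`, which does not involve
`x`, is subtracted: completing the square gives

  `(μ/2)‖x‖² + (ρ/2)‖x - u‖² - (μρ/(μ+ρ)/2)‖u‖² = ((μ+ρ)/2)‖x - (ρ/(μ+ρ)) u‖²`

(`moreau_complete_square`), so `f x + (ρ/2)‖x - u‖² - (μρ/(μ+ρ)/2)‖u‖²` is the sum of the convex
function `f - (μ/2)‖·‖²` and a multiple of the squared norm of a linear map of `(x, u)`. Minimizing a
jointly convex function over one of its variables leaves a convex function of the other.

For the infimum to be finite, `f` must be bounded below (`bddBelow_range_of_strongly_convex`):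
the convex function `f - (μ/2)‖·‖²` has an affine minorant, and the quadratic term
dominates it.
-/

open Set Filter Topology

/-- The quadratic form left over once the strong convexity constant of the envelope is subtracted
is a positive multiple of a squared norm, hence jointly convex in `(x, u)`. -/
lemma moreau_complete_square {E : Type*} [NormedAddCommGroup E] [InnerProductSpace ℝ E]
    {μ ρ : ℝ} (hμ : 0 < μ) (hρ : 0 < ρ) (x u : E) :
    μ / 2 * ‖x‖ ^ 2 + ρ / 2 * ‖x - u‖ ^ 2 - (μ * ρ / (μ + ρ)) / 2 * ‖u‖ ^ 2 =
      (μ + ρ) / 2 * ‖x - (ρ / (μ + ρ)) • u‖ ^ 2 := by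
  have h : μ + ρ ≠ 0 := by positivity
  rw [norm_sub_sq_real, norm_sub_sq_real, norm_smul, real_inner_smul_right, mul_pow,
    Real.norm_eq_abs, sq_abs]
  field_simp
  ring

lemma bddBelow_range_of_strongly_convex {E : Type*} [NormedAddCommGroup E]
    [InnerProductSpace ℝ E] [FiniteDimensional ℝ E] {f : E → ℝ} {μ : ℝ} (hμ : 0 < μ)
    (hsc : ConvexOn ℝ univ (fun x => f x - μ / 2 * ‖x‖ ^ 2)) :
    BddBelow (range f) := by
  have hcont := hsc.continuousOn isOpen_univ
  obtain ⟨l, c, hl, -⟩ := hsc.exists_affine_le_of_lt (𝕜 := ℝ) (mem_univ 0)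
    (sub_one_lt _) isClosed_univ hcont.lowerSemicontinuousOn
  -- The constant is `c` plus the minimum over `t` of `(μ/2)t² - ‖l‖t`.
  refine ⟨c - ‖l‖ ^ 2 / (2 * μ), ?_⟩
  rintro _ ⟨x, rfl⟩
  have h1 : l x + c ≤ f x - μ / 2 * ‖x‖ ^ 2 := by simpa using hl ⟨x, mem_univ x⟩
  have h2 : -(‖l‖ * ‖x‖) ≤ l x := (abs_le.mp (l.le_opNorm x)).1
  have h3 : μ / 2 * ‖x‖ ^ 2 - ‖l‖ * ‖x‖ + ‖l‖ ^ 2 / (2 * μ) =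
      (μ * ‖x‖ - ‖l‖) ^ 2 / (2 * μ) := by
    field_simp
    ring
  have h4 : 0 ≤ (μ * ‖x‖ - ‖l‖) ^ 2 / (2 * μ) := by positivity
  linarith

/-- The Moreau envelope `e(u) = ⨅ x, f x + (ρ/2)‖x - u‖²` of a
`μ`-strongly convex function `f` is a real-valued (in particular, the infimum is over a
set bounded below) function that is `(μρ/(μ+ρ))`-strongly convex. -/
theorem moreau_envelope_strongly_convex {n : ℕ}
    (f : EuclideanSpace ℝ (Fin n) → ℝ) (μ ρ : ℝ) (hμ : 0 < μ) (hρ : 0 < ρ)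
    (hsc : ConvexOn ℝ univ (fun x => f x - μ / 2 * ‖x‖ ^ 2)) :
    (∀ u : EuclideanSpace ℝ (Fin n),
      BddBelow (range (fun x : EuclideanSpace ℝ (Fin n) => f x + ρ / 2 * ‖x - u‖ ^ 2))) ∧
    ConvexOn ℝ univ (fun u : EuclideanSpace ℝ (Fin n) =>
      (⨅ x : EuclideanSpace ℝ (Fin n), (f x + ρ / 2 * ‖x - u‖ ^ 2)) -
        (μ * ρ / (μ + ρ)) / 2 * ‖u‖ ^ 2) := by
  have hbdd : ∀ u : EuclideanSpace ℝ (Fin n),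
      BddBelow (range (fun x : EuclideanSpace ℝ (Fin n) => f x + ρ / 2 * ‖x - u‖ ^ 2)) := by
    intro u
    obtain ⟨c, hc⟩ := bddBelow_range_of_strongly_convex hμ hsc
    refine ⟨c, ?_⟩
    rintro _ ⟨x, rfl⟩
    have h1 : c ≤ f x := hc ⟨x, rfl⟩
    have h2 : 0 ≤ ρ / 2 * ‖x - u‖ ^ 2 := by positivity
    simp only
    linarith
  refine ⟨hbdd, convex_univ, ?_⟩
  intro u _ v _ a b ha hb hab
  simp only [smul_eq_mul, mul_sub, Real.mul_iInf_of_nonneg ha, Real.mul_iInf_of_nonneg hb]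
  have key : (⨅ x : EuclideanSpace ℝ (Fin n), (f x + ρ / 2 * ‖x - (a • u + b • v)‖ ^ 2)) -
        (μ * ρ / (μ + ρ)) / 2 * ‖a • u + b • v‖ ^ 2 +
        a * ((μ * ρ / (μ + ρ)) / 2 * ‖u‖ ^ 2) + b * ((μ * ρ / (μ + ρ)) / 2 * ‖v‖ ^ 2) ≤
      (⨅ x, a * (f x + ρ / 2 * ‖x - u‖ ^ 2)) + ⨅ y, b * (f y + ρ / 2 * ‖y - v‖ ^ 2) := by
    refine le_ciInf_add_ciInf fun x y => ?_
    -- Test the infimum at the same convex combination of `x` and `y` as that of `u` and `v`.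
    have hinf := ciInf_le (hbdd (a • u + b • v)) (a • x + b • y)
    have hf := hsc.2 (mem_univ x) (mem_univ y) ha hb hab
    have hsq := ((convexOn_univ_norm (E := EuclideanSpace ℝ (Fin n))).pow
      (fun _ _ => norm_nonneg _) 2).2 (mem_univ (x - (ρ / (μ + ρ)) • u))
      (mem_univ (y - (ρ / (μ + ρ)) • v)) ha hb hab
    have hlin : a • (x - (ρ / (μ + ρ)) • u) + b • (y - (ρ / (μ + ρ)) • v) =
        (a • x + b • y) - (ρ / (μ + ρ)) • (a • u + b • v) := by
      module
    simp only [hlin, Pi.pow_apply, smul_eq_mul] at hinf hf hsq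
    have hsq' := mul_le_mul_of_nonneg_left hsq (show 0 ≤ (μ + ρ) / 2 by positivity)
    have hx := congrArg (a * ·) (moreau_complete_square hμ hρ x u)
    have hy := congrArg (b * ·) (moreau_complete_square hμ hρ y v)
    have hxy := moreau_complete_square hμ hρ (a • x + b • y) (a • u + b • v)
    linarith
  linarith
end

section
/- Let μ, l, κ > 0 and for ρ > 0 define c(ρ) = min{ μρ/(μ+ρ), κ/(l+ρ) }. Then there exists a unique ρ* > 0 satisfying μρ*/(μ+ρ*) = κ/(l+ρ*); moreover c(ρ) ≤ c(ρ*) for every ρ > 0, and c(ρ*) = 2μκ / ( √((μl − κ)² + 4μ²κ) + μl + κ ), which is strictly less than μ. -/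
/-!
The equation `μρ/(μ+ρ) = κ/(l+ρ)` is equivalent, for `ρ > 0`, to the quadratic
`μρ² + (μl - κ)ρ - μκ = 0`. Its discriminant exceeds `(μl - κ)²`, so
`(S - (μl - κ)) / (2μ)`, with `S` the square root of the discriminant, is a positive root.
Since `μρ/(μ+ρ)` is strictly increasing and `κ/(l+ρ)` strictly decreasing, the two curves
cross only there, and the minimum of the two is largest at the crossing. Substituting the root
into `κ/(l+ρ)` gives the closed form, and the bound by `μ` is the inequality `κ - μl < S`.
-/

open Set Filter Topology

/-- For `μ, l, κ > 0` and `c(ρ) = min (μρ/(μ+ρ)) (κ/(l+ρ))`, there is a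
unique `ρ* > 0` with `μρ*/(μ+ρ*) = κ/(l+ρ*)`; it maximizes `c` over `ρ > 0`, and
`c(ρ*) = 2μκ / (√((μl - κ)² + 4μ²κ) + μl + κ) < μ`. -/
theorem proximal_rate_optimization (μ l κ : ℝ) (hμ : 0 < μ) (hl : 0 < l) (hκ : 0 < κ) :
    ∃ ρs : ℝ, 0 < ρs ∧
      μ * ρs / (μ + ρs) = κ / (l + ρs) ∧
      (∀ ρ : ℝ, 0 < ρ → μ * ρ / (μ + ρ) = κ / (l + ρ) → ρ = ρs) ∧
      (∀ ρ : ℝ, 0 < ρ →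
        min (μ * ρ / (μ + ρ)) (κ / (l + ρ)) ≤
          min (μ * ρs / (μ + ρs)) (κ / (l + ρs))) ∧
      min (μ * ρs / (μ + ρs)) (κ / (l + ρs)) =
        2 * μ * κ / (Real.sqrt ((μ * l - κ) ^ 2 + 4 * μ ^ 2 * κ) + μ * l + κ) ∧
      2 * μ * κ / (Real.sqrt ((μ * l - κ) ^ 2 + 4 * μ ^ 2 * κ) + μ * l + κ) < μ := by
  -- `S` is the square root of the discriminant of `μρ² + (μl - κ)ρ - μκ`.
  set S := Real.sqrt ((μ * l - κ) ^ 2 + 4 * μ ^ 2 * κ) with hS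
  have hSsq : S ^ 2 = (μ * l - κ) ^ 2 + 4 * μ ^ 2 * κ := Real.sq_sqrt (by positivity)
  have hS0 : 0 ≤ S := Real.sqrt_nonneg _
  have hSabs : |μ * l - κ| < S := by
    refine abs_lt_of_sq_lt_sq ?_ hS0
    rw [hSsq]
    have : 0 < 4 * μ ^ 2 * κ := by positivity
    linarith
  obtain ⟨hSneg, hSpos⟩ := abs_lt.mp hSabs
  obtain ⟨r, hr⟩ : ∃ r, r = (S - (μ * l - κ)) / (2 * μ) := ⟨_, rfl⟩
  have hr0 : 0 < r := hr ▸ div_pos (by linarith) (by linarith)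
  have hrS : S = 2 * μ * r + (μ * l - κ) := by
    rw [hr]
    field_simp
    ring
  have heq : μ * r / (μ + r) = κ / (l + r) := by
    rw [div_eq_div_iff (by positivity) (by positivity)]
    rw [hrS] at hSsq
    have h : 4 * μ * (μ * r * (l + r) - κ * (μ + r)) = 0 := by linear_combination hSsq
    have := (mul_eq_zero.mp h).resolve_left (by positivity)
    linarith
  have hinc : ∀ a b : ℝ, 0 < a → a < b → μ * a / (μ + a) < μ * b / (μ + b) := by
    intro a b ha hab
    have hb : 0 < b := ha.trans hab
    rw [div_lt_div_iff₀ (by positivity) (by positivity)]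
    have : 0 < μ ^ 2 * (b - a) := mul_pos (by positivity) (sub_pos.mpr hab)
    linarith
  have hdec : ∀ a b : ℝ, 0 < a → a < b → κ / (l + b) < κ / (l + a) := by
    intro a b ha hab
    exact div_lt_div_of_pos_left hκ (by positivity) (by linarith)
  refine ⟨r, hr0, heq, ?_, ?_, ?_, ?_⟩
  · intro ρ hρ h
    rcases lt_trichotomy ρ r with hlt | rfl | hgt
    · linarith [hinc ρ r hρ hlt, hdec ρ r hρ hlt]
    · rfl
    · linarith [hinc r ρ hr0 hgt, hdec r ρ hr0 hgt]
  · intro ρ hρ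
    rw [← heq, min_self]
    rcases lt_trichotomy ρ r with hlt | rfl | hgt
    · exact (min_le_left _ _).trans (hinc ρ r hρ hlt).le
    · exact min_le_left _ _
    · exact (min_le_right _ _).trans ((hdec r ρ hr0 hgt).le.trans heq.ge)
  · rw [heq, min_self, hrS, div_eq_div_iff (by positivity) (by nlinarith [mul_pos hμ hr0, mul_pos hμ hl])]
    ring
  · rw [div_lt_iff₀ (by linarith [mul_pos hμ hl])]
    linarith [mul_pos hμ (show 0 < S + μ * l - κ by linarith)]
end

section
/- Let H be a real inner product space, let P ⊆ H be a nonempty convex set, and let Ψ : H → H be a metric projection onto P, i.e., Ψ(r) ∈ P and ‖Ψ(r) − r‖ ≤ ‖q − r‖ for all r ∈ H and q ∈ P. Let p ∈ P, p* ∈ P, s ∈ H, and suppose π ∈ H is such that (Ψ(p + δ·s) − p)/δ → π as δ → 0⁺. Then ⟨p* − p, s − π⟩ ≤ 0. -/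
/-!
Write `v δ = δ⁻¹ • (Ψ (p + δ • s) - p)`, so that `Ψ (p + δ • s) = p + δ • v δ`. The variational
inequality for a nearest point of a convex set (`inner_sub_nearest_nonpos`), applied at `p + δ • s`
against `ps`, reads `δ * ⟪s - v δ, (ps - p) - δ • v δ⟫ ≤ 0`. Dividing by `δ > 0` and letting
`δ → 0⁺` gives the claim, because `v δ → pi` forces `δ • v δ → 0`.
-/

open Set Filter Topology RealInnerProductSpace

/-- The variational inequality: the vector from a nearest point `v` of a convex set to `r` makes a
right or obtuse angle with every direction from `v` into the set. -/
theorem inner_sub_nearest_nonpos {H : Type*} [NormedAddCommGroup H] [InnerProductSpace ℝ H]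
    {P : Set H} (hP : Convex ℝ P) {r v : H} (hv : v ∈ P) (hmin : ∀ q ∈ P, ‖v - r‖ ≤ ‖q - r‖)
    {w : H} (hw : w ∈ P) : ⟪r - v, w - v⟫ ≤ 0 := by
  refine (norm_eq_iInf_iff_real_inner_le_zero hP hv).1 ?_ w hw
  have : Nonempty P := ⟨⟨v, hv⟩⟩
  refine le_antisymm (le_ciInf fun q => ?_)
    (ciInf_le (f := fun w : P => ‖r - w‖) ⟨0, ?_⟩ ⟨v, hv⟩)
  · rw [norm_sub_rev r v, norm_sub_rev r q]
    exact hmin q q.2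
  · rintro _ ⟨q, rfl⟩
    exact norm_nonneg _

/-- For a metric projection `Ψ` onto a nonempty convex set `P` in a real
inner product space, if `(Ψ(p + δ s) - p)/δ → π` as `δ → 0⁺`, then
`⟪p* - p, s - π⟫ ≤ 0` for all `p, p* ∈ P`. -/
theorem vector_field_projection_inner_nonpos {H : Type*}
    [NormedAddCommGroup H] [InnerProductSpace ℝ H]
    (P : Set H) (hPne : P.Nonempty) (hPconv : Convex ℝ P)
    (Ψ : H → H) (hΨmem : ∀ r, Ψ r ∈ P)
    (hΨproj : ∀ r, ∀ q ∈ P, ‖Ψ r - r‖ ≤ ‖q - r‖)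
    (p ps : H) (hp : p ∈ P) (hps : ps ∈ P) (s pi : H)
    (hlim : Tendsto (fun δ : ℝ => δ⁻¹ • (Ψ (p + δ • s) - p)) (𝓝[>] 0) (𝓝 pi)) :
    ⟪ps - p, s - pi⟫ ≤ 0 := by
  have hδ : Tendsto (fun δ : ℝ => δ) (𝓝[>] 0) (𝓝 0) :=
    tendsto_nhdsWithin_of_tendsto_nhds tendsto_id
  have hT := (tendsto_const_nhds (x := ps - p)).sub (hδ.smul hlim) |>.inner (𝕜 := ℝ)
    ((tendsto_const_nhds (x := s)).sub hlim)
  rw [zero_smul, sub_zero] at hT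
  refine le_of_tendsto hT ?_
  filter_upwards [self_mem_nhdsWithin] with δ hpos
  have hpos : 0 < δ := hpos
  have key := inner_sub_nearest_nonpos hPconv (hΨmem (p + δ • s)) (hΨproj (p + δ • s)) hps
  set v := δ⁻¹ • (Ψ (p + δ • s) - p) with hv
  have hΨ : Ψ (p + δ • s) = p + δ • v := by
    rw [hv, smul_inv_smul₀ hpos.ne']
    abel
  have h₁ : p + δ • s - (p + δ • v) = δ • (s - v) := by
    rw [smul_sub]
    abel
  rw [hΨ, h₁, real_inner_smul_left, ← sub_sub, real_inner_comm] at key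
  exact nonpos_of_mul_nonpos_right key hpos
end

section
/- Let X ⊆ ℝⁿ and Y ⊆ ℝᵐ be nonempty closed convex sets, and let S : ℝⁿ × ℝᵐ → ℝ be convex-concave and differentiable. Let Ψ_X and Ψ_Y denote the metric projections onto X and Y. Suppose (x*, y*) ∈ X × Y is an equilibrium point of the projected saddle flow dynamics, i.e., (Ψ_X(x* + δ·(−∇ₓS(x*, y*))) − x*)/δ → 0 and (Ψ_Y(y* + δ·∇_yS(x*, y*)) − y*)/δ → 0 as δ → 0⁺. Then (x*, y*) is a saddle point of S on X × Y: S(x*, y) ≤ S(x*, y*) ≤ S(x, y*) for all x ∈ X and y ∈ Y. -/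
/-!
The equilibrium condition says that the step quotients `w δ = (Ψ (p + δ s) - p) / δ` tend to `0`.
Dividing the variational inequality `⟪r - Ψ r, q - Ψ r⟫ ≤ 0` of the metric projection at
`r = p + δ s` by `δ` gives `⟪s - w δ, q - p - δ w δ⟫ ≤ 0`, and letting `δ → 0⁺` yields
`⟪s, q - p⟫ ≤ 0` for every `q` in the set (`inner_nonpos_of_projected_field_zero`).
With `s` the negative gradient of a convex function this is its first-order condition, which is
sufficient for a global minimum over the set (`le_of_convex_of_inner_gradient`). It is applied to
`S(·, y*)` on `X` and to `-S(x*, ·)` on `Y`.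
-/

open Set Filter Topology

section helpers

variable {E : Type*} [NormedAddCommGroup E] [InnerProductSpace ℝ E]

/-- If the vector field projection of `s` at `p` vanishes, then `s` satisfies the inequality defining
the normal cone of `P` at `p`. -/
lemma inner_nonpos_of_projected_field_zero {P : Set E} (hP : Convex ℝ P) {Ψ : E → E}
    (hmem : ∀ r, Ψ r ∈ P) (hproj : ∀ r, ∀ q ∈ P, ‖Ψ r - r‖ ≤ ‖q - r‖) {p s : E}
    (hlim : Tendsto (fun δ : ℝ => δ⁻¹ • (Ψ (p + δ • s) - p)) (𝓝[>] 0) (𝓝 0))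
    {q : E} (hq : q ∈ P) : inner ℝ s (q - p) ≤ 0 := by
  have hvar : ∀ r, inner ℝ (r - Ψ r) (q - Ψ r) ≤ 0 := by
    intro r
    have : Nonempty P := ⟨⟨q, hq⟩⟩
    refine (norm_eq_iInf_iff_real_inner_le_zero hP (hmem r)).1 (le_antisymm ?_ ?_) q hq
    · refine le_ciInf fun w => ?_
      rw [norm_sub_rev r, norm_sub_rev r]
      exact hproj r w w.2
    · exact ciInf_le (f := fun w : P => ‖r - w‖)
        ⟨0, by rintro _ ⟨w, rfl⟩; exact norm_nonneg _⟩ ⟨Ψ r, hmem r⟩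
  set w : ℝ → E := fun δ => δ⁻¹ • (Ψ (p + δ • s) - p) with hw
  have hδ : Tendsto (fun δ : ℝ => δ) (𝓝[>] 0) (𝓝 0) := tendsto_id.mono_left nhdsWithin_le_nhds
  have hlim' : Tendsto (fun δ => inner ℝ (s - w δ) (q - p - δ • w δ)) (𝓝[>] 0)
      (𝓝 (inner ℝ (s - 0) (q - p - (0 : ℝ) • (0 : E)))) :=
    (tendsto_const_nhds.sub hlim).inner (tendsto_const_nhds.sub (hδ.smul hlim))
  simp only [sub_zero, smul_zero] at hlim'
  refine le_of_tendsto hlim' ?_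
  filter_upwards [self_mem_nhdsWithin] with δ hδpos
  have hpos : (0 : ℝ) < δ := hδpos
  have hΨ : Ψ (p + δ • s) = p + δ • w δ := by
    simp [hw, smul_smul, hpos.ne']
  have h := hvar (p + δ • s)
  rw [hΨ, add_sub_add_left_eq_sub, ← smul_sub, ← sub_sub, real_inner_smul_left] at h
  exact nonpos_of_mul_nonpos_right h hpos

/-- First-order sufficient condition: the derivative at `0` of the convex function
`t ↦ f (p + t (q - p))` is at most its slope between `0` and `1`. -/
lemma le_of_convex_of_inner_gradient [CompleteSpace E] {f : E → ℝ} (hf : ConvexOn ℝ univ f)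
    {p q g : E} (hg : HasGradientAt f g p) (h : inner ℝ (-g) (q - p) ≤ 0) : f p ≤ f q := by
  have hline : ConvexOn ℝ univ (fun t : ℝ => f (AffineMap.lineMap p q t)) :=
    hf.comp_affineMap (AffineMap.lineMap p q)
  have hderiv : HasDerivAt (fun t : ℝ => f (AffineMap.lineMap p q t)) (inner ℝ g (q - p)) 0 := by
    have hF : HasFDerivAt f (InnerProductSpace.toDual ℝ E g) (AffineMap.lineMap p q (0 : ℝ)) := by
      rw [AffineMap.lineMap_apply_zero]
      exact hg.hasFDerivAt
    exact hF.comp_hasDerivAt (0 : ℝ) AffineMap.hasDerivAt_lineMap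
  have hs := hline.le_slope_of_hasDerivAt (mem_univ 0) (mem_univ 1) one_pos hderiv
  rw [slope_def_field] at hs
  simp only [AffineMap.lineMap_apply_zero, AffineMap.lineMap_apply_one, sub_zero, div_one] at hs
  rw [inner_neg_left] at h
  linarith

end helpers

/-- For nonempty closed convex `X, Y` and a convex-concave differentiable
`S`, any equilibrium point of the projected saddle flow dynamics (i.e., a point where
both vector field projections vanish) is a saddle point of `S` on `X × Y`. -/
theorem projected_equilibrium_is_saddle {n m : ℕ}
    (X : Set (EuclideanSpace ℝ (Fin n))) (Y : Set (EuclideanSpace ℝ (Fin m)))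
    (hXne : X.Nonempty) (hXcl : IsClosed X) (hXconv : Convex ℝ X)
    (hYne : Y.Nonempty) (hYcl : IsClosed Y) (hYconv : Convex ℝ Y)
    (S : EuclideanSpace ℝ (Fin n) → EuclideanSpace ℝ (Fin m) → ℝ)
    (hconv : ∀ y, ConvexOn ℝ univ (fun x => S x y))
    (hconc : ∀ x, ConcaveOn ℝ univ (fun y => S x y))
    (hdiff : Differentiable ℝ
      (fun p : EuclideanSpace ℝ (Fin n) × EuclideanSpace ℝ (Fin m) => S p.1 p.2))
    (ΨX : EuclideanSpace ℝ (Fin n) → EuclideanSpace ℝ (Fin n))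
    (hΨXmem : ∀ r, ΨX r ∈ X) (hΨXproj : ∀ r, ∀ q ∈ X, ‖ΨX r - r‖ ≤ ‖q - r‖)
    (ΨY : EuclideanSpace ℝ (Fin m) → EuclideanSpace ℝ (Fin m))
    (hΨYmem : ∀ r, ΨY r ∈ Y) (hΨYproj : ∀ r, ∀ q ∈ Y, ‖ΨY r - r‖ ≤ ‖q - r‖)
    (xs : EuclideanSpace ℝ (Fin n)) (ys : EuclideanSpace ℝ (Fin m))
    (hxs : xs ∈ X) (hys : ys ∈ Y)
    (heqx : Tendsto (fun δ : ℝ =>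
        δ⁻¹ • (ΨX (xs + δ • (-(gradient (fun x' => S x' ys) xs))) - xs))
      (𝓝[>] 0) (𝓝 0))
    (heqy : Tendsto (fun δ : ℝ =>
        δ⁻¹ • (ΨY (ys + δ • gradient (fun y' => S xs y') ys) - ys))
      (𝓝[>] 0) (𝓝 0)) :
    ∀ x ∈ X, ∀ y ∈ Y, S xs y ≤ S xs ys ∧ S xs ys ≤ S x ys := by
  intro x hx y hy
  constructor
  · have hd : DifferentiableAt ℝ (fun y' => S xs y') ys :=
      (hdiff (xs, ys)).comp ys ((differentiableAt_const xs).prodMk differentiableAt_id)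
    have hneg : HasGradientAt (fun y' => -S xs y') (-gradient (fun y' => S xs y') ys) ys := by
      rw [hasGradientAt_iff_hasFDerivAt, map_neg]
      exact hd.hasGradientAt.hasFDerivAt.neg
    have h := inner_nonpos_of_projected_field_zero hYconv hΨYmem hΨYproj heqy hy
    exact neg_le_neg_iff.1
      (le_of_convex_of_inner_gradient (hconc xs).neg hneg (by rwa [neg_neg]))
  · have hd : DifferentiableAt ℝ (fun x' => S x' ys) xs :=
      (hdiff (xs, ys)).comp (f := fun x' => (x', ys)) xs
        (differentiableAt_id.prodMk (differentiableAt_const ys))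
    exact le_of_convex_of_inner_gradient (hconv ys) hd.hasGradientAt
      (inner_nonpos_of_projected_field_zero hXconv hΨXmem hΨXproj heqx hx)
end

section
/- Let f : ℝⁿ → ℝ be convex and differentiable with l-Lipschitz gradient, i.e., ‖∇f(x) − ∇f(x')‖ ≤ l‖x − x'‖ for all x, x'. Let A : ℝⁿ → ℝᵐ be a linear map whose adjoint Aᵀ satisfies ‖Aᵀy‖² ≥ κ‖y‖² for all y ∈ ℝᵐ (κ > 0), let b ∈ ℝᵐ, and let α, η > 0 satisfy 2η > lα. Define L̃(u, y) = f(u − αAᵀy) + η⟨y, Au − b⟩ − ηα‖Aᵀy‖². Then for every y ∈ ℝᵐ, the map u ↦ L̃(u, y) is convex (and is μ-strongly convex whenever f is μ-strongly convex), and for every u ∈ ℝⁿ the map y ↦ L̃(u, y) is ((2ηα − lα²)κ)-strongly concave. -/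
/-!
Both halves rest on two-point convexity inequalities with weights `a + b = 1`.

In `u`, the function `L̃(·, y)` is `f` precomposed with a translation, plus an affine function, so it
inherits the modulus of convexity of `f`.

In `y`, the Lipschitz gradient gives the descent-type bound
`a f(x) + b f(y) - f(a x + b y) ≤ (l/2) a b ‖x - y‖²` (`two_point_le_of_lipschitz_gradient`), i.e.
`(l/2)‖·‖² - f` is convex. Hence `y ↦ -f(u - αAᵀy)` is convex up to a defect
`(lα²/2) a b ‖Aᵀ(y₁ - y₂)‖²`, while `ηα‖Aᵀy‖²` has the convexity surplus
`ηα a b ‖Aᵀ(y₁ - y₂)‖²`. The net surplus is `(ηα - lα²/2) a b ‖Aᵀ(y₁ - y₂)‖²`, with a positive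
coefficient because `lα < 2η`, and it is bounded below using `‖Aᵀy‖² ≥ κ‖y‖²`.
-/

open Set Filter Topology RealInnerProductSpace

section Auxiliary

variable {E : Type*} [NormedAddCommGroup E] [InnerProductSpace ℝ E]

lemma norm_sq_convex_comb (x y : E) {a b : ℝ} (hab : a + b = 1) :
    ‖a • x + b • y‖ ^ 2 = a * ‖x‖ ^ 2 + b * ‖y‖ ^ 2 - a * b * ‖x - y‖ ^ 2 := by
  obtain rfl : b = 1 - a := by linarith
  rw [norm_add_sq_real, norm_sub_sq_real, norm_smul, norm_smul, inner_smul_left, inner_smul_right,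
    mul_pow, mul_pow, Real.norm_eq_abs, Real.norm_eq_abs, sq_abs, sq_abs]
  simp only [conj_trivial]
  ring

/-- For `f` with `l`-Lipschitz gradient, the function `(l/2)‖·‖² - f` is convex, written as a
two-point inequality. Along the segment `t ↦ x + t(y - x)` its derivative is monotone, by
Cauchy–Schwarz. -/
lemma two_point_le_of_lipschitz_gradient [CompleteSpace E] {f : E → ℝ} {l : ℝ}
    (hf : Differentiable ℝ f)
    (hlip : ∀ x x', ‖gradient f x - gradient f x'‖ ≤ l * ‖x - x'‖)
    (x y : E) {a b : ℝ} (ha : 0 ≤ a) (hb : 0 ≤ b) (hab : a + b = 1) :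
    a * f x + b * f y - f (a • x + b • y) ≤ l / 2 * (a * b * ‖x - y‖ ^ 2) := by
  set d := y - x with hd
  set φ : ℝ → ℝ := fun t => l / 2 * ‖d‖ ^ 2 * t ^ 2 - f (x + t • d) with hφ
  have hderiv : ∀ t, HasDerivAt φ (l * ‖d‖ ^ 2 * t - ⟪gradient f (x + t • d), d⟫) t := by
    intro t
    have h1 : HasDerivAt (fun t : ℝ => x + t • d) d t := by
      simpa using ((hasDerivAt_id t).smul_const d).const_add x
    have h2 := (hf (x + t • d)).hasGradientAt.hasFDerivAt.comp_hasDerivAt t h1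
    have h3 : HasDerivAt (fun t : ℝ => l / 2 * ‖d‖ ^ 2 * t ^ 2) (l * ‖d‖ ^ 2 * t) t := by
      refine ((hasDerivAt_pow 2 t).const_mul (l / 2 * ‖d‖ ^ 2)).congr_deriv ?_
      norm_num
      ring
    refine (h3.sub h2).congr_deriv ?_
    simp
  have hmono : Monotone (deriv φ) := by
    intro s t hst
    rw [(hderiv s).deriv, (hderiv t).deriv]
    have hcs : ⟪gradient f (x + t • d) - gradient f (x + s • d), d⟫ ≤ l * ((t - s) * ‖d‖) * ‖d‖ := by
      refine (real_inner_le_norm _ _).trans ?_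
      gcongr
      refine (hlip _ _).trans_eq ?_
      rw [add_sub_add_left_eq_sub, ← sub_smul, norm_smul, Real.norm_of_nonneg (sub_nonneg.2 hst)]
    rw [inner_sub_left] at hcs
    linarith
  have hconv := hmono.convexOn_univ_of_deriv fun t => (hderiv t).differentiableAt
  have key := hconv.2 (mem_univ 0) (mem_univ 1) ha hb hab
  have hpt : x + b • d = a • x + b • y := by
    obtain rfl : a = 1 - b := by linarith
    rw [hd]; module
  have h1 : x + d = y := by rw [hd]; abel
  simp only [hφ, smul_eq_mul, mul_zero, mul_one, zero_add, zero_smul, add_zero, one_smul, hpt, h1]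
    at key
  rw [norm_sub_rev x y, ← hd]
  obtain rfl : a = 1 - b := by linarith
  linarith

end Auxiliary


/-- For convex differentiable `f` with `l`-Lipschitz gradient, a linear
map `A` with `‖Aᵀy‖² ≥ κ‖y‖²`, and `α, η > 0` with `2η > lα`, the preconditioned
Lagrangian `L̃(u,y) = f(u - αAᵀy) + η⟪y, Au - b⟫ - ηα‖Aᵀy‖²` is convex in `u`
(`μ`-strongly convex if `f` is), and `((2ηα - lα²)κ)`-strongly concave in `y`. -/
theorem preconditioned_lagrangian_convex_strongly_concave {n m : ℕ}
    (f : EuclideanSpace ℝ (Fin n) → ℝ) (l : ℝ) (hl : 0 < l)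
    (hfconv : ConvexOn ℝ univ f) (hfdiff : Differentiable ℝ f)
    (hlip : ∀ x x', ‖gradient f x - gradient f x'‖ ≤ l * ‖x - x'‖)
    (A : EuclideanSpace ℝ (Fin n) →L[ℝ] EuclideanSpace ℝ (Fin m))
    (κ : ℝ) (hκ : 0 < κ)
    (hA : ∀ y, κ * ‖y‖ ^ 2 ≤ ‖ContinuousLinearMap.adjoint A y‖ ^ 2)
    (b : EuclideanSpace ℝ (Fin m)) (α η : ℝ) (hα : 0 < α) (hη : 0 < η)
    (hcond : l * α < 2 * η)
    (Lt : EuclideanSpace ℝ (Fin n) → EuclideanSpace ℝ (Fin m) → ℝ)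
    (hLt : ∀ u y, Lt u y = f (u - α • ContinuousLinearMap.adjoint A y) +
      η * ⟪y, A u - b⟫ - η * α * ‖ContinuousLinearMap.adjoint A y‖ ^ 2) :
    (∀ y, ConvexOn ℝ univ (fun u => Lt u y)) ∧
    (∀ μ : ℝ, 0 < μ → ConvexOn ℝ univ (fun x => f x - μ / 2 * ‖x‖ ^ 2) →
      ∀ y, ConvexOn ℝ univ (fun u => Lt u y - μ / 2 * ‖u‖ ^ 2)) ∧
    (∀ u, ConvexOn ℝ univ
      (fun y => -Lt u y - (2 * η * α - l * α ^ 2) * κ / 2 * ‖y‖ ^ 2)) := by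
  -- The case `μ = 0` is plain convexity, so both claims about `u` are instances of this one.
  have hu : ∀ μ : ℝ, ConvexOn ℝ univ (fun x => f x - μ / 2 * ‖x‖ ^ 2) →
      ∀ y, ConvexOn ℝ univ (fun u => Lt u y - μ / 2 * ‖u‖ ^ 2) := by
    intro μ hμ y
    refine ⟨convex_univ, fun u₁ _ u₂ _ a c ha hc hac => ?_⟩
    simp only [hLt, smul_eq_mul]
    set w := α • ContinuousLinearMap.adjoint A y
    have key := hμ.2 (mem_univ (u₁ - w)) (mem_univ (u₂ - w)) ha hc hac
    have hpt : a • (u₁ - w) + c • (u₂ - w) = a • u₁ + c • u₂ - w := by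
      obtain rfl : a = 1 - c := by linarith
      module
    simp only [smul_eq_mul, norm_sq_convex_comb _ _ hac, sub_sub_sub_cancel_right] at key
    rw [hpt] at key
    rw [norm_sq_convex_comb _ _ hac]
    simp only [map_add, map_smul, inner_sub_right, inner_add_right, inner_smul_right]
    obtain rfl : a = 1 - c := by linarith
    linarith
  refine ⟨fun y => ?_, fun μ _ hμ => hu μ hμ, fun u => ?_⟩
  · simpa using hu 0 (by simpa using hfconv) y
  · refine ⟨convex_univ, fun y₁ _ y₂ _ a c ha hc hac => ?_⟩
    simp only [hLt, smul_eq_mul]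
    set T := ContinuousLinearMap.adjoint A
    have key := two_point_le_of_lipschitz_gradient hfdiff hlip (u - α • T y₁) (u - α • T y₂) ha hc hac
    have hpt : a • (u - α • T y₁) + c • (u - α • T y₂) = u - α • (a • T y₁ + c • T y₂) := by
      obtain rfl : a = 1 - c := by linarith
      module
    have hdiff : ‖(u - α • T y₁) - (u - α • T y₂)‖ ^ 2 = α ^ 2 * ‖T y₁ - T y₂‖ ^ 2 := by
      rw [sub_sub_sub_cancel_left, ← smul_sub, norm_smul, mul_pow, Real.norm_eq_abs, sq_abs,
        norm_sub_rev]
    rw [hpt, hdiff] at key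
    have hcoef : 0 ≤ (2 * η * α - l * α ^ 2) / 2 * (a * c) :=
      mul_nonneg (by nlinarith) (mul_nonneg ha hc)
    have hgap := mul_le_mul_of_nonneg_left (hA (y₁ - y₂)) hcoef
    rw [map_sub] at hgap
    simp only [map_add, map_smul, norm_sq_convex_comb _ _ hac, inner_add_left, real_inner_smul_left]
    linarith
end

section
/- Let f : ℝⁿ → ℝ be differentiable, let A : ℝⁿ → ℝᵐ be linear, b ∈ ℝᵐ, and η, α > 0. Define L(x, y) = f(x) + η⟨y, Ax − b⟩ and L̃(u, y) = f(u − αAᵀy) + η⟨y, Au − b⟩ − ηα‖Aᵀy‖². Then for any (x*, y*) ∈ ℝⁿ × ℝᵐ and u* = x* + αAᵀy*, the point (x*, y*) is a stationary point of L (i.e., ∇ₓL(x*, y*) = 0 and ∇_yL(x*, y*) = 0) if and only if (u*, y*) is a stationary point of L̃ (i.e., ∇_uL̃(u*, y*) = 0 and ∇_yL̃(u*, y*) = 0). In fact, at corresponding points one has ∇_uL̃(u*, y*) = ∇ₓL(x*, y*) and ∇_yL̃(u*, y*) = ∇_yL(x*, y*) − αA∇ₓL(x*, y*). -/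
open Set Filter Topology RealInnerProductSpace

/-!
With `x = u - αAᵀy`, the preconditioned function is the original one in new coordinates:
`L̃(u, y) = L(u - αAᵀy, y)`. The change of variables fixes `y` and, for fixed `y`, is a translation
in `u`, so the chain rule gives `∇_u L̃ = ∇ₓL` and adds the correction `-αA ∇ₓL` to the `y`-gradient.
The four partial gradients are computed explicitly below in terms of `g = ∇f(x*)`. The equivalence
of stationarity follows because `(p, q) ↦ (p, q - αAp)` vanishes exactly where `(p, q)` does.
-/

section

variable {E F : Type*} [NormedAddCommGroup E] [InnerProductSpace ℝ E] [CompleteSpace E]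
  [NormedAddCommGroup F] [InnerProductSpace ℝ F] [CompleteSpace F]

/-- The primal gradient, both for `L` (with `c = 0`, `k = 0`) and for `L̃` (with `c = αAᵀy`). The
constant `k` absorbs the term depending on `y` only. -/
lemma hasGradientAt_primal {f : E → ℝ} {g c u : E} (A : E →L[ℝ] F) (b y : F) (η k : ℝ)
    (hf : HasGradientAt f g (u - c)) :
    HasGradientAt (fun u => f (u - c) + η * ⟪y, A u - b⟫ - k)
      (g + η • ContinuousLinearMap.adjoint A y) u := by
  rw [hasGradientAt_iff_hasFDerivAt] at hf ⊢
  have h1 := hf.comp u ((hasFDerivAt_id (𝕜 := ℝ) u).sub_const c)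
  have h2 := ((hasFDerivAt_const (𝕜 := ℝ) y u).inner ℝ
    (A.hasFDerivAt.sub_const b)).const_mul η
  refine ((h1.add h2).sub_const k).congr_fderiv ?_
  ext v
  simp [ContinuousLinearMap.adjoint_inner_left]

/-- The dual gradient of `L`, at a fixed `x`, where `r` and `w` stand for `f(x)` and `Ax - b`: the function is affine in `y`. -/
lemma hasGradientAt_const_add_mul_inner (r η : ℝ) (w y : F) :
    HasGradientAt (fun y => r + η * ⟪y, w⟫) (η • w) y := by
  rw [hasGradientAt_iff_hasFDerivAt]
  have h := (((hasFDerivAt_id (𝕜 := ℝ) y).inner ℝ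
    (hasFDerivAt_const (𝕜 := ℝ) w y)).const_mul η).const_add r
  refine h.congr_fderiv ?_
  ext v
  simp [real_inner_comm]

/-- The dual gradient of `L̃`, at a fixed `u`, where `w` stands for `Au - b`. -/
lemma hasGradientAt_dual {f : E → ℝ} {g u : E} (A : E →L[ℝ] F) (w y : F) (η α : ℝ)
    (hf : HasGradientAt f g (u - α • ContinuousLinearMap.adjoint A y)) :
    HasGradientAt (fun y => f (u - α • ContinuousLinearMap.adjoint A y) + η * ⟪y, w⟫ -
        η * α * ‖ContinuousLinearMap.adjoint A y‖ ^ 2)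
      (-(α • A g) + η • w - (2 * η * α) • A (ContinuousLinearMap.adjoint A y)) y := by
  rw [hasGradientAt_iff_hasFDerivAt] at hf ⊢
  have hA := (ContinuousLinearMap.adjoint A).hasFDerivAt (x := y)
  have h1 := hf.comp y ((hA.const_smul α).const_sub u)
  have h2 := ((hasFDerivAt_id (𝕜 := ℝ) y).inner ℝ
    (hasFDerivAt_const (𝕜 := ℝ) w y)).const_mul η
  have h3 := hA.norm_sq.const_mul (η * α)
  refine ((h1.add h2).sub h3).congr_fderiv ?_
  ext v
  simp [ContinuousLinearMap.adjoint_inner_right, real_inner_comm]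
  ring

end

/-- Under the change of variables `u = x + αAᵀy`, stationary points of
`L(x,y) = f(x) + η⟪y, Ax - b⟫` correspond exactly to stationary points of
`L̃(u,y) = f(u - αAᵀy) + η⟪y, Au - b⟫ - ηα‖Aᵀy‖²`; in fact
`∇_u L̃(u*, y*) = ∇ₓL(x*, y*)` and `∇_y L̃(u*, y*) = ∇_y L(x*, y*) - αA ∇ₓL(x*, y*)`. -/
theorem preconditioned_lagrangian_stationary_iff {n m : ℕ}
    (f : EuclideanSpace ℝ (Fin n) → ℝ) (hfdiff : Differentiable ℝ f)
    (A : EuclideanSpace ℝ (Fin n) →L[ℝ] EuclideanSpace ℝ (Fin m))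
    (b : EuclideanSpace ℝ (Fin m)) (η α : ℝ) (hη : 0 < η) (hα : 0 < α)
    (L : EuclideanSpace ℝ (Fin n) → EuclideanSpace ℝ (Fin m) → ℝ)
    (hL : ∀ x y, L x y = f x + η * ⟪y, A x - b⟫)
    (Lt : EuclideanSpace ℝ (Fin n) → EuclideanSpace ℝ (Fin m) → ℝ)
    (hLt : ∀ u y, Lt u y = f (u - α • ContinuousLinearMap.adjoint A y) +
      η * ⟪y, A u - b⟫ - η * α * ‖ContinuousLinearMap.adjoint A y‖ ^ 2)
    (xs : EuclideanSpace ℝ (Fin n)) (ys : EuclideanSpace ℝ (Fin m))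
    (us : EuclideanSpace ℝ (Fin n))
    (hus : us = xs + α • ContinuousLinearMap.adjoint A ys) :
    ((gradient (fun x => L x ys) xs = 0 ∧ gradient (fun y => L xs y) ys = 0) ↔
      (gradient (fun u => Lt u ys) us = 0 ∧ gradient (fun y => Lt us y) ys = 0)) ∧
    gradient (fun u => Lt u ys) us = gradient (fun x => L x ys) xs ∧
    gradient (fun y => Lt us y) ys =
      gradient (fun y => L xs y) ys - α • A (gradient (fun x => L x ys) xs) := by
  have hsub : us - α • ContinuousLinearMap.adjoint A ys = xs := by rw [hus, add_sub_cancel_right]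
  have hf : HasGradientAt f (gradient f xs) xs := (hfdiff xs).hasGradientAt
  have hx : gradient (fun x => L x ys) xs =
      gradient f xs + η • ContinuousLinearMap.adjoint A ys := by
    have h := hasGradientAt_primal (c := 0) A b ys η 0 ((sub_zero xs).symm ▸ hf)
    simp only [sub_zero] at h
    simpa only [hL] using h.gradient
  have hy : gradient (fun y => L xs y) ys = η • (A xs - b) := by
    simpa only [hL] using (hasGradientAt_const_add_mul_inner (f xs) η (A xs - b) ys).gradient
  have hu : gradient (fun u => Lt u ys) us =
      gradient f xs + η • ContinuousLinearMap.adjoint A ys := by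
    simpa only [hLt] using (hasGradientAt_primal A b ys η
      (η * α * ‖ContinuousLinearMap.adjoint A ys‖ ^ 2) (hsub.symm ▸ hf)).gradient
  have hv : gradient (fun y => Lt us y) ys = -(α • A (gradient f xs)) + η • (A us - b) -
      (2 * η * α) • A (ContinuousLinearMap.adjoint A ys) := by
    simpa only [hLt] using (hasGradientAt_dual A (A us - b) ys η α (hsub.symm ▸ hf)).gradient
  have key1 : gradient (fun u => Lt u ys) us = gradient (fun x => L x ys) xs := hu.trans hx.symm
  have key2 : gradient (fun y => Lt us y) ys =
      gradient (fun y => L xs y) ys - α • A (gradient (fun x => L x ys) xs) := by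
    rw [hv, hy, hx, hus]
    simp only [map_add, map_smul]
    module
  refine ⟨?_, key1, key2⟩
  rw [key1, key2]
  -- Once `∇ₓL = 0`, the correction term `αA ∇ₓL` vanishes.
  refine and_congr_right fun h => ?_
  rw [h, map_zero, smul_zero, sub_zero]
end

section
/- Let f_s : ℝ^{n_s} → ℝ be μ_s-strongly convex (μ_s > 0) and let f_c : ℝ^{n_c} → ℝ be convex. Let A_s : ℝ^{n_s} → ℝᵐ and A_c : ℝ^{n_c} → ℝᵐ be linear maps and b ∈ ℝᵐ, and define the Lagrangian L(x_s, x_c, y) = f_s(x_s) + f_c(x_c) + ⟨y, A_s x_s + A_c x_c − b⟩ and the reduced Lagrangian L̄(x_c, y) = inf over x_s ∈ ℝ^{n_s} of L(x_s, x_c, y), whose infimum is attained at a unique minimizer x̄_s(y) depending only on y. Then a point (x_s*, x_c*, y*) with y* ∈ Y := { y ∈ ℝᵐ : y ≥ 0 } is a saddle point of L on ℝ^{n_s} × ℝ^{n_c} × Y (minimizing over (x_s, x_c), maximizing over y ∈ Y) if and only if x_s* = x̄_s(y*) and (x_c*, y*) is a saddle point of L̄ on ℝ^{n_c} × Y (minimizing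 over x_c, maximizing over y ∈ Y). -/
/-!
A saddle point of `L` forces `x_s* = x̄_s(y*)` by uniqueness of the minimizer, and then restricts to a
saddle point of `L̄`; conversely, minimality in `(x_s, x_c)` is immediate because `L̄` is a partial
infimum of `L`. The substantial point is maximality of `y*` for `L(x_s*, x_c*, ·)`, which is affine
in `y` with gradient the residual `r = A_s x_s* + A_c x_c* - b`: one must show `⟪d, r⟫ ≤ 0` for
every feasible direction `d = y - y*`. This is a Danskin-type argument. Comparing
`L̄(x_c*, y* + t d) ≤ L̄(x_c*, y*)` with the quadratic growth of `L(·, x_c*, y*)` around `x_s*`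
(`strong_convex_growth`) gives, for `e = x̄_s(y* + t d) - x_s*`,
`(μ_s / 4) ‖e‖² + t ⟪d, r⟫ + t ⟪d, A_s e⟫ ≤ 0`. Completing the square in `‖e‖` bounds `⟪d, r⟫` by a
constant multiple of `t`, and `t` is an arbitrary number in `(0, 1]`.
-/

open Set Filter Topology RealInnerProductSpace

/-- Quadratic growth of a strongly convex function, perturbed by a linear functional, around a
minimizer. The midpoint inequality gives the constant `μ / 4` without a limiting argument; the
optimal constant would be `μ / 2`. -/
theorem strong_convex_growth {E : Type*} [NormedAddCommGroup E] [InnerProductSpace ℝ E]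
    {f : E → ℝ} {μ : ℝ} (hf : ConvexOn ℝ univ (fun x => f x - μ / 2 * ‖x‖ ^ 2))
    (l : E →ₗ[ℝ] ℝ) {x₀ : E} (hmin : ∀ x, f x₀ + l x₀ ≤ f x + l x) (x : E) :
    f x₀ + l x₀ + μ / 4 * ‖x - x₀‖ ^ 2 ≤ f x + l x := by
  have hs : StrongConvexOn univ μ f := strongConvexOn_iff_convex.2 hf
  have hmid := hs.2 (mem_univ x) (mem_univ x₀) (by norm_num : (0 : ℝ) ≤ 1 / 2)
    (by norm_num : (0 : ℝ) ≤ 1 / 2) (by norm_num)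
  have hm := hmin ((1 / 2 : ℝ) • x + (1 / 2 : ℝ) • x₀)
  simp only [map_add, map_smul, smul_eq_mul] at hm hmid
  linarith

/-- A real number dominated by `t * K` for all `t ∈ (0, 1]` is nonpositive. -/
theorem nonpos_of_forall_le_mul {D K : ℝ} (hK : 0 ≤ K)
    (h : ∀ t : ℝ, 0 < t → t ≤ 1 → D ≤ t * K) : D ≤ 0 := by
  by_contra! hD
  have hDK : 0 < D + K := by linarith
  have ht := h (D / (D + K)) (by positivity) ((div_le_one hDK).2 (by linarith))
  rw [div_mul_eq_mul_div, le_div_iff₀ hDK] at ht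
  nlinarith

/-- For `L(x_s, x_c, y) = f_s(x_s) + f_c(x_c) + ⟪y, A_s x_s + A_c x_c - b⟫`
with `f_s` strongly convex and `f_c` convex, and the reduced Lagrangian
`L̄(x_c, y) = L(x̄_s(y), x_c, y)` where `x̄_s(y)` is the unique minimizer of `L` over
`x_s`, a point `(x_s*, x_c*, y*)` with `y* ≥ 0` is a saddle point of `L` on
`ℝ^{n_s} × ℝ^{n_c} × {y ≥ 0}` iff `x_s* = x̄_s(y*)` and `(x_c*, y*)` is a saddle point
of `L̄` on `ℝ^{n_c} × {y ≥ 0}`. -/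
theorem reduced_lagrangian_saddle_iff {ns nc m : ℕ}
    (fs : EuclideanSpace ℝ (Fin ns) → ℝ) (fc : EuclideanSpace ℝ (Fin nc) → ℝ)
    (μs : ℝ) (hμs : 0 < μs)
    (hfs : ConvexOn ℝ univ (fun x => fs x - μs / 2 * ‖x‖ ^ 2))
    (hfc : ConvexOn ℝ univ fc)
    (As : EuclideanSpace ℝ (Fin ns) →L[ℝ] EuclideanSpace ℝ (Fin m))
    (Ac : EuclideanSpace ℝ (Fin nc) →L[ℝ] EuclideanSpace ℝ (Fin m))
    (b : EuclideanSpace ℝ (Fin m))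
    (L : EuclideanSpace ℝ (Fin ns) → EuclideanSpace ℝ (Fin nc) →
      EuclideanSpace ℝ (Fin m) → ℝ)
    (hL : ∀ xs xc y, L xs xc y = fs xs + fc xc + ⟪y, As xs + Ac xc - b⟫)
    -- `xbar y` is the unique minimizer of `L` in its first argument
    (xbar : EuclideanSpace ℝ (Fin m) → EuclideanSpace ℝ (Fin ns))
    (hxbar_min : ∀ y xc xs, L (xbar y) xc y ≤ L xs xc y)
    (hxbar_unique : ∀ y xc xs, (∀ xs', L xs xc y ≤ L xs' xc y) → xs = xbar y)
    (Lb : EuclideanSpace ℝ (Fin nc) → EuclideanSpace ℝ (Fin m) → ℝ)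
    (hLb : ∀ xc y, Lb xc y = L (xbar y) xc y)
    (xss : EuclideanSpace ℝ (Fin ns)) (xcs : EuclideanSpace ℝ (Fin nc))
    (yss : EuclideanSpace ℝ (Fin m)) (hyss : ∀ i, 0 ≤ yss i) :
    (∀ (xs : EuclideanSpace ℝ (Fin ns)) (xc : EuclideanSpace ℝ (Fin nc))
        (y : EuclideanSpace ℝ (Fin m)), (∀ i, 0 ≤ y i) →
      L xss xcs y ≤ L xss xcs yss ∧ L xss xcs yss ≤ L xs xc yss) ↔
    (xss = xbar yss ∧
      ∀ (xc : EuclideanSpace ℝ (Fin nc)) (y : EuclideanSpace ℝ (Fin m)),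
        (∀ i, 0 ≤ y i) →
        Lb xcs y ≤ Lb xcs yss ∧ Lb xcs yss ≤ Lb xc yss) := by
  constructor
  · intro h
    have hx : xss = xbar yss :=
      hxbar_unique yss xcs xss fun xs' => (h xs' xcs yss hyss).2
    refine ⟨hx, fun xc y hy => ⟨?_, ?_⟩⟩
    · rw [hLb, hLb, ← hx]
      exact (hxbar_min y xcs xss).trans (h xss xcs y hy).1
    · rw [hLb, hLb, ← hx]
      exact (h xss xc y hy).2
  · rintro ⟨hx, h⟩ xs xc y hy
    have hLss : Lb xcs yss = L xss xcs yss := by rw [hLb, ← hx]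
    refine ⟨?_, ?_⟩
    · set d := y - yss with hd
      set r := As xss + Ac xcs - b with hr
      have key : ⟪d, r⟫ ≤ 0 := by
        refine nonpos_of_forall_le_mul (K := (‖d‖ * ‖As‖) ^ 2 / μs) (by positivity) ?_
        intro t ht ht1
        have hfeas : ∀ i, 0 ≤ (yss + t • d) i := by
          intro i
          have h1 := mul_nonneg ht.le (hy i)
          have h2 := mul_nonneg (sub_nonneg.2 ht1) (hyss i)
          simp only [hd, PiLp.add_apply, PiLp.smul_apply, PiLp.sub_apply, smul_eq_mul]
          linarith
        set xt := xbar (yss + t • d) with hxt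
        have hmax : L xt xcs (yss + t • d) ≤ L xss xcs yss := by
          rw [hxt, ← hLb, ← hLss]
          exact (h xcs _ hfeas).1
        have hgrow := strong_convex_growth hfs ((innerₗ _ yss).comp As.toLinearMap) (x₀ := xss)
          (fun x => by
            have hm := hxbar_min yss xcs x
            rw [← hx, hL, hL] at hm
            simp only [inner_add_right, inner_sub_right] at hm
            simp only [LinearMap.comp_apply, innerₗ_apply_apply, ContinuousLinearMap.coe_coe]
            linarith) xt
        simp only [LinearMap.comp_apply, innerₗ_apply_apply, ContinuousLinearMap.coe_coe] at hgrow
        have hcs : -(‖d‖ * ‖As‖ * ‖xt - xss‖) ≤ ⟪d, As (xt - xss)⟫ := by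
          have h1 := neg_le_of_abs_le (abs_real_inner_le_norm d (As (xt - xss)))
          have h2 := mul_le_mul_of_nonneg_left (As.le_opNorm (xt - xss)) (norm_nonneg d)
          linarith
        have hmain : μs / 4 * ‖xt - xss‖ ^ 2 + t * ⟪d, r⟫ + t * ⟪d, As (xt - xss)⟫ ≤ 0 := by
          rw [hL, hL] at hmax
          simp only [hr, map_sub, inner_add_left, real_inner_smul_left, inner_add_right,
            inner_sub_right] at hmax ⊢
          linarith
        set C := ‖d‖ * ‖As‖
        set δ := ‖xt - xss‖
        rw [mul_div_assoc', le_div_iff₀ hμs]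
        have h1 := mul_le_mul_of_nonneg_left hcs ht.le
        have h2 : t * ⟪d, r⟫ ≤ t * C * δ - μs / 4 * δ ^ 2 := by linarith
        have h3 := mul_le_mul_of_nonneg_left h2 hμs.le
        -- completing the square: `μ t C δ - μ² δ² / 4 ≤ t² C²`
        have h4 : t * (⟪d, r⟫ * μs) ≤ t * (t * C ^ 2) := by
          linarith [sq_nonneg (μs * δ / 2 - t * C)]
        exact le_of_mul_le_mul_left h4 ht
      rw [hd, inner_sub_left] at key
      rw [hL, hL]
      linarith
    · have hle := (h xc y hy).2
      rw [hLss, hLb] at hle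
      exact hle.trans (hxbar_min yss xc xs)
end

section
/- Let A : ℝⁿ → ℝᵐ be a linear map with ‖Aᵀy‖² ≤ σ‖y‖² for all y ∈ ℝᵐ (σ > 0), let α > 0 and μ > 0, and set K = max{2, 2σα² + 1}. Let u : [0,∞) → ℝⁿ and y : [0,∞) → ℝᵐ be curves, let (u*, y*) ∈ ℝⁿ × ℝᵐ, and suppose the exponential bound ‖(u(t), y(t)) − (u*, y*)‖ ≤ ‖(u(0), y(0)) − (u*, y*)‖ · e^{−μt} holds for all t ≥ 0. Define x(t) = u(t) − αAᵀy(t) and x* = u* − αAᵀy*. Then ‖(x(t), y(t)) − (x*, y*)‖ ≤ K · ‖(x(0), y(0)) − (x*, y*)‖ · e^{−μt} for all t ≥ 0. -/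
/-!
The change of coordinates `(u, y) ↦ (u - αAᵀy, y)` is linear, and so is its inverse
`(x, y) ↦ (x + αAᵀy, y)`. Since `‖p + q‖² ≤ 2‖p‖² + 2‖q‖²` and `‖αAᵀy‖² ≤ σα²‖y‖²`, each of the
two maps increases the squared Euclidean norm by at most the factor `K = max 2 (2σα² + 1)`, i.e. the
norm by at most `√K`. Passing from `(x, y)` to `(u, y)` at time `t` and back at time `0` costs
`√K · √K = K`.
-/

open Set Filter Topology

/-- A shear `(v, w) ↦ (v + b, w)` with `‖b‖² ≤ c‖w‖²` increases the Euclidean norm by at most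
the factor `√(max 2 (2c + 1))`. -/
lemma sqrt_shear_le {E F : Type*} [SeminormedAddCommGroup E] [SeminormedAddCommGroup F]
    (v b : E) (w : F) (c : ℝ) (hb : ‖b‖ ^ 2 ≤ c * ‖w‖ ^ 2) :
    Real.sqrt (‖v + b‖ ^ 2 + ‖w‖ ^ 2) ≤
      Real.sqrt (max 2 (2 * c + 1)) * Real.sqrt (‖v‖ ^ 2 + ‖w‖ ^ 2) := by
  rw [← Real.sqrt_mul (by positivity)]
  apply Real.sqrt_le_sqrt
  have h1 : ‖v + b‖ ^ 2 ≤ (‖v‖ + ‖b‖) ^ 2 := by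
    gcongr
    exact norm_add_le v b
  have h2 : 2 * ‖v‖ ^ 2 ≤ max 2 (2 * c + 1) * ‖v‖ ^ 2 := by
    gcongr
    exact le_max_left _ _
  have h3 : (2 * c + 1) * ‖w‖ ^ 2 ≤ max 2 (2 * c + 1) * ‖w‖ ^ 2 := by
    gcongr
    exact le_max_right _ _
  nlinarith [sq_nonneg (‖v‖ - ‖b‖)]

/-- If `(u(t), y(t))` converges exponentially to `(u*, y*)` with rate `μ`
and `x(t) = u(t) - αAᵀy(t)`, `x* = u* - αAᵀy*`, where `‖Aᵀy‖² ≤ σ‖y‖²`, then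
`(x(t), y(t))` converges exponentially to `(x*, y*)` with the same rate and constant
`K = max 2 (2σα² + 1)`. -/
theorem preconditioned_coordinates_exponential_bound {n m : ℕ}
    (A : EuclideanSpace ℝ (Fin n) →L[ℝ] EuclideanSpace ℝ (Fin m))
    (σ : ℝ) (hσ : 0 < σ)
    (hA : ∀ y, ‖ContinuousLinearMap.adjoint A y‖ ^ 2 ≤ σ * ‖y‖ ^ 2)
    (α μ : ℝ) (hα : 0 < α) (hμ : 0 < μ)
    (u : ℝ → EuclideanSpace ℝ (Fin n)) (y : ℝ → EuclideanSpace ℝ (Fin m))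
    (us : EuclideanSpace ℝ (Fin n)) (ys : EuclideanSpace ℝ (Fin m))
    (hexp : ∀ t, 0 ≤ t →
      Real.sqrt (‖u t - us‖ ^ 2 + ‖y t - ys‖ ^ 2) ≤
        Real.sqrt (‖u 0 - us‖ ^ 2 + ‖y 0 - ys‖ ^ 2) * Real.exp (-μ * t))
    (x : ℝ → EuclideanSpace ℝ (Fin n))
    (hx : ∀ t, x t = u t - α • ContinuousLinearMap.adjoint A (y t))
    (xs : EuclideanSpace ℝ (Fin n))
    (hxs : xs = us - α • ContinuousLinearMap.adjoint A ys) :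
    ∀ t, 0 ≤ t →
      Real.sqrt (‖x t - xs‖ ^ 2 + ‖y t - ys‖ ^ 2) ≤
        max 2 (2 * σ * α ^ 2 + 1) *
          Real.sqrt (‖x 0 - xs‖ ^ 2 + ‖y 0 - ys‖ ^ 2) * Real.exp (-μ * t) := by
  intro t ht
  have hb : ∀ s, ‖α • ContinuousLinearMap.adjoint A (y s - ys)‖ ^ 2 ≤
      (σ * α ^ 2) * ‖y s - ys‖ ^ 2 := by
    intro s
    rw [norm_smul, mul_pow, Real.norm_eq_abs, sq_abs]
    nlinarith [mul_le_mul_of_nonneg_left (hA (y s - ys)) (sq_nonneg α)]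
  have hxu : ∀ s, x s - xs =
      (u s - us) + -(α • ContinuousLinearMap.adjoint A (y s - ys)) := by
    intro s
    rw [hx, hxs, map_sub, smul_sub]
    abel
  have hux : ∀ s, u s - us =
      (x s - xs) + α • ContinuousLinearMap.adjoint A (y s - ys) := by
    intro s
    rw [hxu]
    abel
  have h1 := sqrt_shear_le (u t - us) (-(α • ContinuousLinearMap.adjoint A (y t - ys)))
    (y t - ys) (σ * α ^ 2) (by rw [norm_neg]; exact hb t)
  have h2 := sqrt_shear_le (x 0 - xs) (α • ContinuousLinearMap.adjoint A (y 0 - ys))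
    (y 0 - ys) (σ * α ^ 2) (hb 0)
  rw [← hxu, ← mul_assoc] at h1
  rw [← hux, ← mul_assoc] at h2
  set K := max 2 (2 * σ * α ^ 2 + 1) with hK
  have hK0 : 0 ≤ K := le_trans zero_le_two (le_max_left _ _)
  calc Real.sqrt (‖x t - xs‖ ^ 2 + ‖y t - ys‖ ^ 2)
      ≤ Real.sqrt K * Real.sqrt (‖u t - us‖ ^ 2 + ‖y t - ys‖ ^ 2) := h1
    _ ≤ Real.sqrt K * (Real.sqrt (‖u 0 - us‖ ^ 2 + ‖y 0 - ys‖ ^ 2) * Real.exp (-μ * t)) := by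
        gcongr
        exact hexp t ht
    _ ≤ Real.sqrt K * ((Real.sqrt K * Real.sqrt (‖x 0 - xs‖ ^ 2 + ‖y 0 - ys‖ ^ 2)) *
          Real.exp (-μ * t)) := by
        gcongr
    _ = K * Real.sqrt (‖x 0 - xs‖ ^ 2 + ‖y 0 - ys‖ ^ 2) * Real.exp (-μ * t) := by
        rw [← mul_assoc, ← mul_assoc, Real.mul_self_sqrt hK0]
end
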